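/- Let μ be an ergodic process on Σ = 𝒜^{ℤ_{≥0}^d} with entropy rate h(μ) = h, let ε > 0, and let (φ_n)_{n≥1} be any sequence of injective maps φ_n : Σ^n → ∪_{l≥1} 𝒜^l from n-words to finite strings over 𝒜. Then for μ-almost every x, |φ_n(x^n)| > n^d·(h − ε) for all sufficiently large n; that is, no sequence of lossless codes beats the entropy bound infinitely often. -/

import Mathlib

open MeasureTheory Filter Topology

namespace SRU1408

/-- A site of the lattice `ℤ_{≥0}^d`. -/
abbrev Site (d : ℕ) := Fin d → ℕ

/-- An infinite array over the alphabet `Fin A`, i.e. an element of `Σ = 𝒜^{ℤ_{≥0}^d}`. -/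
abbrev Config (A d : ℕ) := Site d → Fin A

/-- A cubical `k`-word, i.e. an element of `Σ^k = 𝒜^{Λ_k}`. -/
abbrev Word (A d k : ℕ) := (Fin d → Fin k) → Fin A

variable {A d : ℕ}

/-- The pattern of `x` on the cube `Λ_k + c`, as a `k`-word. -/
def wordAt (x : Config A d) (k : ℕ) (c : Site d) : Word A d k :=
  fun i => x fun j => c j + (i j : ℕ)

/-- The lattice shift `σ_r`. -/
def shift (r : Site d) (x : Config A d) : Config A d := fun i => x (i + r)

/-- Stationarity: invariance under all shifts. -/
def Stationary (μ : Measure (Config A d)) : Prop := ∀ r : Site d, μ.map (shift r) = μ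

/-- Ergodicity: stationary, and every measurable set invariant under all shifts is trivial. -/
def ErgodicShift (μ : Measure (Config A d)) : Prop :=
  Stationary μ ∧ ∀ E : Set (Config A d), MeasurableSet E →
    (∀ r : Site d, shift r ⁻¹' E = E) → μ E = 0 ∨ μ E = 1

/-- The `k`-word marginal distribution `μ^k`, as a probability vector on `Σ^k`. -/
noncomputable def wordDist (μ : Measure (Config A d)) (k : ℕ) : Word A d k → ℝ :=
  fun w => (μ {x | wordAt x k 0 = w}).toReal

/-- Base-`A` entropy of a probability vector. -/
noncomputable def entH (A : ℕ) {W : Type*} [Fintype W] (p : W → ℝ) : ℝ :=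
  -∑ w, p w * Real.logb A (p w)

/-- `μ` has entropy rate `h` (base-`A` logarithms): `H(μ^n)/n^d → h`. -/
def HasEntropyRate (μ : Measure (Config A d)) (h : ℝ) : Prop :=
  Tendsto (fun n : ℕ => entH A (wordDist μ n) / (n : ℝ) ^ d) atTop (𝓝 h)

/-!
Call an `n`-word short if its code has length at most `n ^ d * (h - ε)`. By injectivity there are,
for large `n`, at most `A ^ (θ * n ^ d)` short `n`-words, for some `θ < h`. If `x ^ n` were short
infinitely often with positive probability, stationarity and the Vitali covering lemma would yield
disjoint cubes carrying short words and covering on average a fixed fraction of `Λ_N`. Mark these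
cubes and encode their words at rate `θ`; encode the remaining sites by blocks of side `K` with an
ideal code for `μ ^ K`, averaging over the `K ^ d` positions of the block grid. The remaining region
has a small boundary because the cubes are large, so by the mean ergodic theorem it costs about `h`
symbols per site; listing the cubes is cheap for the same reason. By Gibbs' inequality `H(μ ^ N)` is
at most the expected total, hence below `N ^ d * h` by a fixed fraction of `N ^ d`: a contradiction.
-/

section Cubes

/-- The cube `v + Λ_n`. -/
def cube (v : Site d) (n : ℕ) : Finset (Site d) :=
  Fintype.piFinset fun j => Finset.Ico (v j) (v j + n)

theorem mem_cube {v s : Site d} {n : ℕ} : s ∈ cube v n ↔ ∀ j, v j ≤ s j ∧ s j < v j + n := by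
  simp only [cube, Fintype.mem_piFinset, Finset.mem_Ico]

theorem card_cube (v : Site d) (n : ℕ) : (cube v n).card = n ^ d := by
  simp only [cube, Fintype.card_piFinset, Nat.card_Ico, Nat.add_sub_cancel_left,
    Finset.prod_const, Finset.card_univ, Fintype.card_fin]

theorem self_mem_cube (v : Site d) {n : ℕ} (hn : 0 < n) : v ∈ cube v n :=
  mem_cube.2 fun _ => ⟨le_rfl, Nat.lt_add_of_pos_right hn⟩

theorem cube_subset_cube (v : Site d) {m n : ℕ} (h : m ≤ n) : cube v m ⊆ cube v n :=
  fun _ hs => mem_cube.2 fun j =>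
    ⟨(mem_cube.1 hs j).1, (mem_cube.1 hs j).2.trans_le (Nat.add_le_add_left h _)⟩

end Cubes

section DependsOn

variable {ι κ α β : Type*}

theorem dependsOn_prod {F : κ → (ι → α) → ℝ} {S : κ → Finset ι} [DecidableEq ι] {t : Finset κ}
    (hF : ∀ k ∈ t, DependsOn (F k) (S k)) :
    DependsOn (fun x => ∏ k ∈ t, F k x) (t.biUnion S) :=
  fun _ _ h => Finset.prod_congr rfl fun k hk =>
    hF k hk fun i hi => h i (Finset.mem_biUnion.2 ⟨k, hk, hi⟩)

variable [Finite α] {S : Finset ι}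

theorem exists_abs_le_of_dependsOn {f : (ι → α) → ℝ} (hf : DependsOn f S) :
    ∃ G, ∀ x, |f x| ≤ G := by
  obtain ⟨g, rfl⟩ := dependsOn_iff_exists_comp.1 hf
  obtain ⟨G, hG⟩ := (Set.finite_range fun y => |g y|).bddAbove
  exact ⟨G, fun x => hG (Set.mem_range_self _)⟩

variable [MeasurableSpace α] [MeasurableSingletonClass α]

theorem measurable_of_dependsOn [Nonempty β] [MeasurableSpace β] {f : (ι → α) → β}
    (hf : DependsOn f S) : Measurable f := by
  obtain ⟨g, rfl⟩ := dependsOn_iff_exists_comp.1 hf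
  exact (Measurable.of_discrete (f := g)).comp (Finset.measurable_restrict S)

theorem integrable_of_dependsOn {μ : Measure (ι → α)} [IsFiniteMeasure μ] {f : (ι → α) → ℝ}
    (hf : DependsOn f S) : Integrable f μ :=
  let ⟨G, hG⟩ := exists_abs_le_of_dependsOn hf
  .of_bound (measurable_of_dependsOn hf).aestronglyMeasurable G (ae_of_all _ hG)

end DependsOn

section Words

theorem wordAt_eq_wordAt_iff {x y : Config A d} {n : ℕ} {v : Site d} :
    wordAt x n v = wordAt y n v ↔ ∀ s ∈ cube v n, x s = y s := by
  refine ⟨fun h s hs => ?_, fun h => funext fun i => h _ <| mem_cube.2 fun j =>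
    ⟨Nat.le_add_right _ _, Nat.add_lt_add_left (i j).isLt _⟩⟩
  rw [mem_cube] at hs
  have hsub : (fun j => v j + (s j - v j)) = s := funext fun j => Nat.add_sub_cancel' (hs j).1
  simpa only [wordAt, hsub] using
    congrFun h fun j => ⟨s j - v j, Nat.sub_lt_left_of_lt_add (hs j).1 (hs j).2⟩

theorem dependsOn_comp_wordAt {β : Type*} {n : ℕ} (v : Site d) (f : Word A d n → β) :
    DependsOn (fun x => f (wordAt x n v)) (cube v n) :=
  fun _ _ h => congrArg f (wordAt_eq_wordAt_iff.2 h)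

theorem exists_eq_comp_wordAt {β : Type*} [Nonempty β] {f : Config A d → β} {n : ℕ} {v : Site d}
    (hf : DependsOn f (cube v n)) : ∃ g : Word A d n → β, f = g ∘ fun x => wordAt x n v :=
  (Function.factorsThrough_iff f).1 fun _ _ h => hf (wordAt_eq_wordAt_iff.1 h)

theorem measurable_wordAt (n : ℕ) (v : Site d) :
    Measurable fun x : Config A d => wordAt x n v :=
  measurable_pi_lambda _ fun _ => measurable_pi_apply _

theorem measurable_shift (r : Site d) : Measurable (shift (A := A) r) :=
  measurable_pi_lambda _ fun _ => measurable_pi_apply _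

theorem shift_shift (r s : Site d) (x : Config A d) : shift r (shift s x) = shift (r + s) x :=
  funext fun i => congrArg x (add_assoc i r s)

theorem wordAt_shift (x : Config A d) (n : ℕ) (v : Site d) :
    wordAt (shift v x) n 0 = wordAt x n v :=
  funext fun _ => congrArg x <| funext fun j => by simp [add_comm]

theorem integral_comp_wordAt (μ : Measure (Config A d)) [IsFiniteMeasure μ] (n : ℕ) (v : Site d)
    (f : Word A d n → ℝ) :
    ∫ x, f (wordAt x n v) ∂μ = ∑ w, (μ.map fun x => wordAt x n v).real {w} * f w := by
  rw [← integral_map (measurable_wordAt n v).aemeasurable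
    Measurable.of_discrete.aestronglyMeasurable, integral_fintype .of_finite]
  rfl

theorem wordDist_eq_map_real (μ : Measure (Config A d)) (n : ℕ) (w : Word A d n) :
    wordDist μ n w = (μ.map fun x => wordAt x n 0).real {w} :=
  (map_measureReal_apply (measurable_wordAt n 0) (measurableSet_singleton w)).symm

theorem integral_comp_wordAt_zero (μ : Measure (Config A d)) [IsFiniteMeasure μ] (n : ℕ)
    (f : Word A d n → ℝ) : ∫ x, f (wordAt x n 0) ∂μ = ∑ w, wordDist μ n w * f w := by
  simp only [integral_comp_wordAt, wordDist_eq_map_real]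

theorem wordDist_nonneg (μ : Measure (Config A d)) (n : ℕ) (w : Word A d n) :
    0 ≤ wordDist μ n w := ENNReal.toReal_nonneg

theorem sum_wordDist (μ : Measure (Config A d)) [IsProbabilityMeasure μ] (n : ℕ) :
    ∑ w, wordDist μ n w = 1 := by
  simpa using (integral_comp_wordAt_zero μ n fun _ => 1).symm

end Words

section Stationary

variable {μ : Measure (Config A d)}

theorem Stationary.measurePreserving (h : Stationary μ) (r : Site d) :
    MeasurePreserving (shift r) μ μ :=
  ⟨measurable_shift r, h r⟩

theorem Stationary.integrable_comp_shift (h : Stationary μ) (r : Site d) {f : Config A d → ℝ}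
    (hf : Integrable f μ) : Integrable (fun x => f (shift r x)) μ :=
  (h.measurePreserving r).integrable_comp_of_integrable hf

theorem Stationary.integral_comp_shift (h : Stationary μ) (r : Site d) {f : Config A d → ℝ}
    (hf : AEStronglyMeasurable f μ) : ∫ x, f (shift r x) ∂μ = ∫ x, f x ∂μ :=
  (h.measurePreserving r).hasLaw.integral_comp hf

theorem Stationary.integral_sum_comp_shift (h : Stationary μ) (U : Finset (Site d))
    {f : Config A d → ℝ} (hf : Integrable f μ) :
    ∫ x, ∑ v ∈ U, f (shift v x) ∂μ = U.card * ∫ x, f x ∂μ := by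
  rw [integral_finsetSum _ fun v _ => h.integrable_comp_shift v hf]
  simp only [h.integral_comp_shift _ hf.aestronglyMeasurable, Finset.sum_const, nsmul_eq_mul]

theorem Stationary.ae_wordDist_pos [IsFiniteMeasure μ] (h : Stationary μ) (n : ℕ) :
    ∀ᵐ x ∂μ, ∀ v, 0 < wordDist μ n (wordAt x n v) := by
  have hnull : ∀ᵐ x ∂μ, ∀ w, wordDist μ n w = 0 → wordAt x n 0 ≠ w :=
    ae_all_iff.2 fun w => by
      by_cases hw : wordDist μ n w = 0
      · have hnull := (measureReal_eq_zero_iff).1 hw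
        exact (measure_eq_zero_iff_ae_notMem.1 hnull).mono fun _ hx _ => hx
      · exact ae_of_all _ fun _ h => (hw h).elim
  refine ae_all_iff.2 fun v => ?_
  filter_upwards [(h.measurePreserving v).quasiMeasurePreserving.ae hnull] with x hx
  refine (wordDist_nonneg μ n _).lt_of_ne fun hzero => hx _ hzero.symm (wordAt_shift x n v)

end Stationary

section Independence

variable {ι κ α : Type*} [Finite α] [MeasurableSpace α] [MeasurableSingletonClass α]
  (P : ι → Measure α) [∀ i, IsProbabilityMeasure (P i)]

theorem integral_mul_of_dependsOn_disjoint {f g : (ι → α) → ℝ} {S T : Finset ι}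
    (hf : DependsOn f S) (hg : DependsOn g T) (hST : Disjoint S T) :
    ∫ x, f x * g x ∂Measure.infinitePi P =
      (∫ x, f x ∂Measure.infinitePi P) * ∫ x, g x ∂Measure.infinitePi P := by
  have hfm := (measurable_of_dependsOn hf).aestronglyMeasurable (μ := Measure.infinitePi P)
  have hgm := (measurable_of_dependsOn hg).aestronglyMeasurable (μ := Measure.infinitePi P)
  have hindep := (ProbabilityTheory.iIndepFun_infinitePi (P := P) (X := fun _ y => y)
    fun _ => measurable_id).indepFun_finset S T hST measurable_pi_apply
  obtain ⟨f', rfl⟩ := dependsOn_iff_exists_comp.1 hf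
  obtain ⟨g', rfl⟩ := dependsOn_iff_exists_comp.1 hg
  exact (hindep.comp (Measurable.of_discrete (f := f')) (Measurable.of_discrete
    (f := g'))).integral_fun_mul_eq_mul_integral hfm hgm

theorem integral_prod_of_dependsOn_disjoint {F : κ → (ι → α) → ℝ} {S : κ → Finset ι}
    {t : Finset κ} (hF : ∀ k ∈ t, DependsOn (F k) (S k))
    (hS : (t : Set κ).PairwiseDisjoint S) :
    ∫ x, ∏ k ∈ t, F k x ∂Measure.infinitePi P =
      ∏ k ∈ t, ∫ x, F k x ∂Measure.infinitePi P := by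
  classical
  induction t using Finset.induction_on with
  | empty => simp
  | insert k t hk ih =>
    rw [Finset.forall_mem_insert] at hF
    rw [Finset.coe_insert, Set.pairwiseDisjoint_insert_of_notMem (by simpa using hk)] at hS
    have hdisj : Disjoint (S k) (t.biUnion S) :=
      (Finset.disjoint_biUnion_right _ _ _).2 hS.2
    simp only [Finset.prod_insert hk]
    rw [integral_mul_of_dependsOn_disjoint P hF.1 (dependsOn_prod hF.2) hdisj, ih hF.2 hS.1]

end Independence

section Uniform

/-- The uniform product measure on configurations. Densities with respect to it express codes:
a function of `x` on `Λ_N` with integral at most `1` is `A ^ N ^ d` times a subprobability on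
`N`-words. -/
noncomputable def uniform (A d : ℕ) [NeZero A] : Measure (Config A d) :=
  Measure.infinitePi fun _ => ProbabilityTheory.uniformOn Set.univ

variable [NeZero A]

instance : IsProbabilityMeasure (uniform A d) :=
  inferInstanceAs (IsProbabilityMeasure (Measure.infinitePi _))

theorem map_wordAt_uniform_real_singleton {n : ℕ} (v : Site d) (w : Word A d n) :
    ((uniform A d).map fun x => wordAt x n v).real {w} = ((A : ℝ) ^ n ^ d)⁻¹ := by
  have hinj : Function.Injective fun (i : Fin d → Fin n) j => v j + (i j : ℕ) := fun i i' h =>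
    funext fun j => Fin.ext (Nat.add_left_cancel (congrFun h j))
  have hmap : (uniform A d).map (fun x => wordAt x n v) =
      Measure.infinitePi fun _ => ProbabilityTheory.uniformOn Set.univ :=
    Measure.map_infinitePi_infinitePi_of_inj hinj
  rw [hmap, measureReal_def, Measure.infinitePi_singleton_of_fintype]
  simp [ProbabilityTheory.uniformOn_univ]

theorem integral_uniform_comp_wordAt {n : ℕ} (v : Site d) (q : Word A d n → ℝ) :
    ∫ x, (A : ℝ) ^ n ^ d * q (wordAt x n v) ∂uniform A d = ∑ w, q w := by
  have hA : (A : ℝ) ^ n ^ d ≠ 0 := pow_ne_zero _ (NeZero.ne _)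
  rw [integral_const_mul, integral_comp_wordAt]
  simp only [map_wordAt_uniform_real_singleton, ← Finset.mul_sum, mul_inv_cancel_left₀ hA]

end Uniform

section Gibbs

theorem entH_le_neg_sum_mul_logb {W : Type*} [Fintype W] {p q : W → ℝ} (hp : ∀ w, 0 ≤ p w)
    (hp1 : ∑ w, p w = 1) (hq : ∀ w, 0 ≤ q w) (hq1 : ∑ w, q w ≤ 1)
    (hpq : ∀ w, 0 < p w → 0 < q w) : entH A p ≤ -∑ w, p w * Real.logb A (q w) := by
  have hterm (w : W) : p w * Real.log (q w) - p w * Real.log (p w) ≤ q w - p w := by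
    rcases (hp w).eq_or_lt with h | h
    · simpa only [← h, zero_mul, sub_zero] using hq w
    have hlog := Real.log_le_sub_one_of_pos (div_pos (hpq w h) h)
    rw [Real.log_div (hpq w h).ne' h.ne'] at hlog
    calc p w * Real.log (q w) - p w * Real.log (p w)
        = p w * (Real.log (q w) - Real.log (p w)) := (mul_sub _ _ _).symm
      _ ≤ p w * (q w / p w - 1) := by gcongr
      _ = q w - p w := by field_simp
  have hsum := Finset.sum_le_sum fun w (_ : w ∈ Finset.univ) => hterm w
  simp only [Finset.sum_sub_distrib] at hsum
  simp only [entH, Real.logb, mul_div_assoc', ← Finset.sum_div, neg_le_neg_iff]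
  exact div_le_div_of_nonneg_right (by linarith) (Real.log_natCast_nonneg A)

theorem entH_wordDist_le [NeZero A] (hA : 2 ≤ A) {μ : Measure (Config A d)}
    [IsProbabilityMeasure μ] {N : ℕ} {f L : Config A d → ℝ} (hf : DependsOn f (cube (0 : Site d) N))
    (hf0 : ∀ x, 0 ≤ f x) (hf1 : ∫ x, f x ∂uniform A d ≤ 1) (hL : Integrable L μ)
    (hLf : ∀ᵐ x ∂μ, (A : ℝ) ^ L x ≤ f x) :
    entH A (wordDist μ N) ≤ (N : ℝ) ^ d - ∫ x, L x ∂μ := by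
  have hA1 : (1 : ℝ) < A := by exact_mod_cast hA
  have hApos : (0 : ℝ) < A := one_pos.trans hA1
  have hV : (0 : ℝ) < (A : ℝ) ^ N ^ d := by positivity
  obtain ⟨g, hg⟩ := exists_eq_comp_wordAt hf
  let q (w : Word A d N) : ℝ := |g w| / (A : ℝ) ^ N ^ d
  have hqf (x : Config A d) : q (wordAt x N 0) = f x / (A : ℝ) ^ N ^ d := by
    rw [← abs_of_nonneg (hf0 x), hg]
    rfl
  have hq1 : ∑ w, q w ≤ 1 := by
    rw [← integral_uniform_comp_wordAt 0 q]
    simpa only [hqf, mul_div_cancel₀ _ hV.ne'] using hf1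
  have hfpos : ∀ᵐ x ∂μ, 0 < f x := hLf.mono fun x => (Real.rpow_pos_of_pos hApos _).trans_le
  have hpq (w : Word A d N) (hw : 0 < wordDist μ N w) : 0 < q w := by
    obtain ⟨x, hxw, hx⟩ := ((frequently_ae_mem_iff.2 fun h => hw.ne' <|
      (measureReal_eq_zero_iff).2 h).and_eventually hfpos).exists
    rw [← show wordAt x N 0 = w from hxw, hqf]
    positivity
  have hlog : ∀ᵐ x ∂μ, L x ≤ Real.logb A (q (wordAt x N 0)) + (N : ℝ) ^ d := by
    filter_upwards [hLf, hfpos] with x hx hx0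
    rw [hqf, Real.logb_div hx0.ne' hV.ne', ← Real.rpow_natCast, Real.logb_rpow hApos hA1.ne',
      Nat.cast_pow, sub_add_cancel]
    exact (Real.le_logb_iff_rpow_le hA1 hx0).2 hx
  have hint : Integrable (fun x => Real.logb A (q (wordAt x N 0))) μ :=
    integrable_of_dependsOn (dependsOn_comp_wordAt 0 fun w => Real.logb A (q w))
  have hle := integral_mono_ae hL (hint.add (integrable_const _)) hlog
  simp only [Pi.add_apply] at hle
  rw [integral_add hint (integrable_const _), integral_const, probReal_univ, one_smul,
    integral_comp_wordAt_zero μ N fun w => Real.logb A (q w)] at hle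
  linarith [entH_le_neg_sum_mul_logb (A := A) (wordDist_nonneg μ N) (sum_wordDist μ N)
    (fun w => by positivity) hq1 hpq]

end Gibbs

section Packing

/-- `l` encodes a packing of `Λ_N`: the cubes `p.1 + Λ_{p.2}` with `p ∈ l` lie in `Λ_N` and are
pairwise disjoint. -/
structure IsCubePacking (N : ℕ) (l : Finset (Site d × ℕ)) : Prop where
  subset : ∀ p ∈ l, cube p.1 p.2 ⊆ cube 0 N
  pairwiseDisjoint : (l : Set (Site d × ℕ)).PairwiseDisjoint fun p => cube p.1 p.2

/-- The total volume of the cubes of a packing. -/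
def coveredVolume (l : Finset (Site d × ℕ)) : ℕ := ∑ p ∈ l, p.2 ^ d

/-- The part of `Λ_N` outside the cubes of a packing. -/
def uncovered (N : ℕ) (l : Finset (Site d × ℕ)) : Finset (Site d) :=
  cube 0 N \ l.biUnion fun p => cube p.1 p.2

/-- The corners of the cubes of side `K` contained in `U`. -/
def core (K : ℕ) (U : Finset (Site d)) : Finset (Site d) := {v ∈ U | cube v K ⊆ U}

/-- The coordinatewise residue modulo `K`; cubes of side `K` whose corners have equal residues
tile the lattice. -/
def residue (K : ℕ) (v : Site d) : Site d := fun j => v j % K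

theorem IsCubePacking.card_uncovered_add_coveredVolume {N : ℕ} {l : Finset (Site d × ℕ)}
    (hl : IsCubePacking N l) : (uncovered N l).card + coveredVolume l = N ^ d := by
  have hcover : (l.biUnion fun p => cube p.1 p.2).card = coveredVolume l := by
    rw [Finset.card_biUnion fun p hp q hq => hl.pairwiseDisjoint hp hq]
    simp only [card_cube, coveredVolume]
  rw [uncovered, ← hcover, Finset.card_sdiff_add_card_eq_card
    (Finset.biUnion_subset.2 hl.subset), card_cube]

theorem biUnion_core_subset (K : ℕ) (U : Finset (Site d)) :
    ((core K U).biUnion fun v => cube v K) ⊆ U :=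
  Finset.biUnion_subset.2 fun _ hv => (Finset.mem_filter.1 hv).2

theorem cube_subset_of_mem_core_uncovered {K N : ℕ} {l : Finset (Site d × ℕ)} {v : Site d}
    (hv : v ∈ core K (uncovered N l)) : cube v K ⊆ cube 0 N :=
  (Finset.mem_filter.1 hv).2.trans Finset.sdiff_subset

theorem residue_mem_cube {K : ℕ} (hK : 0 < K) (v : Site d) : residue K v ∈ cube 0 K :=
  mem_cube.2 fun j => ⟨Nat.zero_le _, (Nat.mod_lt (v j) hK).trans_eq (zero_add K).symm⟩

theorem disjoint_cube_of_residue_eq {K : ℕ} {v w : Site d} (h : residue K v = residue K w)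
    (hne : v ≠ w) : Disjoint (cube v K) (cube w K) := by
  refine Finset.disjoint_left.2 fun s hv hw => hne <| funext fun j => ?_
  rw [mem_cube] at hv hw
  refine Nat.ModEq.eq_of_abs_lt (m := K) (congrFun h j) ?_
  have := hv j
  have := hw j
  rw [abs_lt]
  omega

end Packing

section Density

/-- The density (relative to `uniform`) of the code giving probability `A ^ (-θ n ^ d)` to each word
of `B n` on each cube of side `n` of the packing `l`. -/
noncomputable def markedDensity (B : ∀ n, Finset (Word A d n)) (θ : ℝ) (l : Finset (Site d × ℕ))
    (x : Config A d) : ℝ :=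
  ∏ p ∈ l, (A : ℝ) ^ p.2 ^ d *
    if wordAt x p.2 p.1 ∈ B p.2 then (A : ℝ) ^ (-(θ * (p.2 : ℝ) ^ d)) else 0

/-- The density (relative to `uniform`) of independent `μ ^ K`-distributed words on the cubes of
side `K` inside `U` whose corners have residue `o`. -/
noncomputable def freeDensity (μ : Measure (Config A d)) (K : ℕ) (o : Site d)
    (U : Finset (Site d)) (x : Config A d) : ℝ :=
  ∏ v ∈ core K U with residue K v = o, (A : ℝ) ^ K ^ d * wordDist μ K (wordAt x K v)

variable (μ : Measure (Config A d)) (B : ∀ n, Finset (Word A d n)) (θ : ℝ) (K : ℕ) (o : Site d)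
  (l : Finset (Site d × ℕ)) (U : Finset (Site d))

theorem markedDensity_nonneg (x : Config A d) : 0 ≤ markedDensity B θ l x :=
  Finset.prod_nonneg fun _ _ => mul_nonneg (by positivity) (by split_ifs <;> positivity)

theorem freeDensity_nonneg (x : Config A d) : 0 ≤ freeDensity μ K o U x :=
  Finset.prod_nonneg fun _ _ => mul_nonneg (by positivity) (wordDist_nonneg _ _ _)

theorem dependsOn_markedDensity :
    DependsOn (markedDensity B θ l) (l.biUnion fun p => cube p.1 p.2) :=
  dependsOn_prod fun p _ => dependsOn_comp_wordAt p.1 fun w =>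
    (A : ℝ) ^ p.2 ^ d * if w ∈ B p.2 then (A : ℝ) ^ (-(θ * (p.2 : ℝ) ^ d)) else 0

theorem dependsOn_freeDensity : DependsOn (freeDensity μ K o U) U :=
  (dependsOn_prod fun v _ => dependsOn_comp_wordAt v fun w =>
    (A : ℝ) ^ K ^ d * wordDist μ K w).mono <| Finset.coe_subset.2 <|
      (Finset.biUnion_subset_biUnion_of_subset_left _ (Finset.filter_subset _ _)).trans <|
        biUnion_core_subset K U

theorem freeDensity_eq_rpow (hA : 2 ≤ A) {x : Config A d}
    (hx : ∀ v, 0 < wordDist μ K (wordAt x K v)) :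
    freeDensity μ K o U x = (A : ℝ) ^ ∑ v ∈ core K U with residue K v = o,
      ((K : ℝ) ^ d + Real.logb A (wordDist μ K (wordAt x K v))) := by
  have hA0 : (0 : ℝ) < A := by positivity
  have hA1 : (A : ℝ) ≠ 1 := by exact_mod_cast (show A ≠ 1 by lia)
  rw [freeDensity, Real.rpow_sum_of_pos hA0]
  refine Finset.prod_congr rfl fun v _ => ?_
  rw [Real.rpow_add hA0, Real.rpow_logb hA0 hA1 (hx v), ← Nat.cast_pow K, Real.rpow_natCast]

section NeZero

variable [NeZero A]

theorem integral_uniform_prod_le_one {ι : Type*} {t : Finset ι} {v : ι → Site d} {n : ι → ℕ}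
    (hdisj : (t : Set ι).PairwiseDisjoint fun i => cube (v i) (n i))
    {q : ∀ i, Word A d (n i) → ℝ} (hq : ∀ i w, 0 ≤ q i w) (hq1 : ∀ i ∈ t, ∑ w, q i w ≤ 1) :
    ∫ x, ∏ i ∈ t, (A : ℝ) ^ n i ^ d * q i (wordAt x (n i) (v i)) ∂uniform A d ≤ 1 := by
  rw [uniform, integral_prod_of_dependsOn_disjoint _
    (fun i _ => dependsOn_comp_wordAt (v i) fun w => (A : ℝ) ^ n i ^ d * q i w) hdisj]
  refine Finset.prod_le_one (fun i _ => integral_nonneg fun x => ?_) fun i hi => ?_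
  · exact mul_nonneg (by positivity) (hq i _)
  · exact (integral_uniform_comp_wordAt (v i) (q i)).trans_le (hq1 i hi)

theorem integral_markedDensity_le_one {B : ∀ n, Finset (Word A d n)} {θ : ℝ}
    {l : Finset (Site d × ℕ)}
    (hl : (l : Set (Site d × ℕ)).PairwiseDisjoint fun p => cube p.1 p.2)
    (hB : ∀ p ∈ l, ((B p.2).card : ℝ) ≤ (A : ℝ) ^ (θ * (p.2 : ℝ) ^ d)) :
    ∫ x, markedDensity B θ l x ∂uniform A d ≤ 1 := by
  refine integral_uniform_prod_le_one (v := Prod.fst) (n := Prod.snd) hl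
    (q := fun p w => if w ∈ B p.2 then (A : ℝ) ^ (-(θ * (p.2 : ℝ) ^ d)) else 0)
    (fun p w => by split_ifs <;> positivity) fun p hp => ?_
  rw [Finset.sum_ite_mem, Finset.univ_inter, Finset.sum_const, nsmul_eq_mul,
    Real.rpow_neg A.cast_nonneg]
  exact mul_inv_le_one_of_le₀ (hB p hp) (by positivity)

theorem integral_freeDensity_le_one [IsProbabilityMeasure μ] :
    ∫ x, freeDensity μ K o U x ∂uniform A d ≤ 1 :=
  integral_uniform_prod_le_one (v := id) (n := fun _ => K)
    (fun _ hv _ hw => disjoint_cube_of_residue_eq <|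
      (Finset.mem_filter.1 hv).2.trans (Finset.mem_filter.1 hw).2.symm)
    (fun _ => wordDist_nonneg μ K) fun _ _ => (sum_wordDist μ K).le

variable {B θ l} in
theorem markedDensity_eq_rpow {x : Config A d} (hl : ∀ p ∈ l, wordAt x p.2 p.1 ∈ B p.2) :
    markedDensity B θ l x = (A : ℝ) ^ ((1 - θ) * coveredVolume l) := by
  have hA0 : (0 : ℝ) < A := Nat.cast_pos.2 (NeZero.pos A)
  rw [markedDensity, coveredVolume, Nat.cast_sum, Finset.mul_sum, Real.rpow_sum_of_pos hA0]
  refine Finset.prod_congr rfl fun p hp => ?_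
  rw [if_pos (hl p hp), ← Real.rpow_natCast, ← Real.rpow_add hA0]
  congr 1
  push_cast
  ring

end NeZero

/-- The density of the code which marks the packing `l` of `Λ_N`: words of `B` on its cubes, free
blocks of side `K` and residue `o` distributed as `μ ^ K`, and uniform symbols elsewhere. -/
noncomputable def packingDensity (N : ℕ) (x : Config A d) : ℝ :=
  markedDensity B θ l x * freeDensity μ K o (uncovered N l) x

theorem packingDensity_nonneg (N : ℕ) (x : Config A d) : 0 ≤ packingDensity μ B θ K o l N x :=
  mul_nonneg (markedDensity_nonneg _ _ _ x) (freeDensity_nonneg _ _ _ _ x)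

theorem dependsOn_packingDensity {N : ℕ} {l : Finset (Site d × ℕ)} (hl : IsCubePacking N l) :
    DependsOn (packingDensity μ B θ K o l N) (cube (0 : Site d) N) := fun _ _ h =>
  congrArg₂ (· * ·)
    (dependsOn_markedDensity B θ l fun i hi => h i (Finset.biUnion_subset.2 hl.subset hi))
    (dependsOn_freeDensity μ K o _ fun i hi => h i (Finset.sdiff_subset hi))

theorem integral_packingDensity_le_one [NeZero A] [IsProbabilityMeasure μ]
    {B : ∀ n, Finset (Word A d n)} {θ : ℝ} {N : ℕ} {l : Finset (Site d × ℕ)}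
    (hl : IsCubePacking N l)
    (hB : ∀ p ∈ l, ((B p.2).card : ℝ) ≤ (A : ℝ) ^ (θ * (p.2 : ℝ) ^ d)) :
    ∫ x, packingDensity μ B θ K o l N x ∂uniform A d ≤ 1 := by
  have hdisj : Disjoint (l.biUnion fun p => cube p.1 p.2) (uncovered N l) := Finset.disjoint_sdiff
  unfold packingDensity
  rw [uniform, integral_mul_of_dependsOn_disjoint _ (dependsOn_markedDensity B θ l)
    (dependsOn_freeDensity μ K o _) hdisj]
  exact mul_le_one₀ (integral_markedDensity_le_one hl.pairwiseDisjoint hB)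
    (integral_nonneg (freeDensity_nonneg μ K o _)) (integral_freeDensity_le_one μ K o _)

end Density

section Mixture

theorem sum_powerset_prod_le_exp {ι : Type*} (P : Finset ι) {a : ι → ℝ} (ha : ∀ i, 0 ≤ a i) :
    ∑ t ∈ P.powerset, ∏ i ∈ t, a i ≤ Real.exp (∑ i ∈ P, a i) := by
  rw [← Finset.prod_one_add, Real.exp_sum]
  exact Finset.prod_le_prod (fun i _ => add_nonneg zero_le_one (ha i)) fun i _ => by
    simpa only [add_comm] using Real.add_one_le_exp (a i)

variable (μ : Measure (Config A d)) (B : ∀ n, Finset (Word A d n)) (θ δ : ℝ) (K : ℕ) (o : Site d)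
  (N m M : ℕ)

open Classical in
/-- The packings of `Λ_N` by cubes with sides between `m` and `M`. -/
noncomputable def packings (d N m M : ℕ) : Finset (Finset (Site d × ℕ)) :=
  {l ∈ (cube 0 N ×ˢ Finset.Icc m M).powerset | IsCubePacking N l}

/-- The mixture of the densities of all packings, marking a cube of side `n` at the cost of
`δ n ^ d` symbols. -/
noncomputable def mixtureDensity (x : Config A d) : ℝ :=
  (A : ℝ) ^ (-(δ * (N : ℝ) ^ d)) * ∑ l ∈ packings d N m M,
    (A : ℝ) ^ (-(δ * coveredVolume l)) * packingDensity μ B θ K o l N x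

variable {N m M} in
theorem mem_packings {l : Finset (Site d × ℕ)} :
    l ∈ packings d N m M ↔ l ⊆ cube 0 N ×ˢ Finset.Icc m M ∧ IsCubePacking N l := by
  classical
  rw [packings, Finset.mem_filter, Finset.mem_powerset]

variable {N m M} in
theorem IsCubePacking.mem_packings_of_side_mem {l : Finset (Site d × ℕ)}
    (hl : IsCubePacking N l) (hm : 0 < m)
    (hside : ∀ p ∈ l, p.2 ∈ Finset.Icc m M) : l ∈ packings d N m M := by
  refine mem_packings.2 ⟨fun p hp => Finset.mem_product.2
    ⟨hl.subset p hp (self_mem_cube _ ?_), hside p hp⟩, hl⟩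
  exact hm.trans_le (Finset.mem_Icc.1 (hside p hp)).1

theorem mixtureDensity_nonneg (x : Config A d) : 0 ≤ mixtureDensity μ B θ δ K o N m M x :=
  mul_nonneg (by positivity) <| Finset.sum_nonneg fun _ _ =>
    mul_nonneg (by positivity) (packingDensity_nonneg _ _ _ _ _ _ _ x)

theorem dependsOn_mixtureDensity :
    DependsOn (mixtureDensity μ B θ δ K o N m M) (cube (0 : Site d) N) := fun _ _ h =>
  congrArg (_ * ·) <| Finset.sum_congr rfl fun _ hl => congrArg (_ * ·) <|
    dependsOn_packingDensity μ B θ K o (mem_packings.1 hl).2 h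

variable {μ B θ δ N m M}

theorem sum_packings_rpow_neg_le [NeZero A]
    (hδ : ∑ n ∈ Finset.Icc m M, (A : ℝ) ^ (-(δ * (n : ℝ) ^ d)) ≤ δ * Real.log A) :
    ∑ l ∈ packings d N m M, (A : ℝ) ^ (-(δ * coveredVolume l)) ≤
      (A : ℝ) ^ (δ * (N : ℝ) ^ d) := by
  have hA : (0 : ℝ) < A := Nat.cast_pos.2 (NeZero.pos A)
  have hprod (l : Finset (Site d × ℕ)) :
      (A : ℝ) ^ (-(δ * coveredVolume l)) = ∏ p ∈ l, (A : ℝ) ^ (-(δ * (p.2 : ℝ) ^ d)) := by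
    rw [← Real.rpow_sum_of_pos hA, Finset.sum_neg_distrib, ← Finset.mul_sum, coveredVolume]
    push_cast
    rfl
  simp only [hprod]
  have hsub : packings d N m M ⊆ (cube 0 N ×ˢ Finset.Icc m M).powerset := fun _ hl =>
    Finset.mem_powerset.2 (mem_packings.1 hl).1
  refine (Finset.sum_le_sum_of_subset_of_nonneg hsub fun _ _ _ =>
    Finset.prod_nonneg fun _ _ => by positivity).trans <|
    (sum_powerset_prod_le_exp _ fun _ => by positivity).trans ?_
  rw [Real.rpow_def_of_pos hA, Real.exp_le_exp, Finset.sum_product]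
  simp only [Finset.sum_const, card_cube, nsmul_eq_mul, Nat.cast_pow]
  calc (N : ℝ) ^ d * ∑ n ∈ Finset.Icc m M, (A : ℝ) ^ (-(δ * (n : ℝ) ^ d))
      ≤ (N : ℝ) ^ d * (δ * Real.log A) := by gcongr
    _ = Real.log A * (δ * (N : ℝ) ^ d) := by ring

theorem eventually_sum_rpow_neg_le (hA : 2 ≤ A) (hd : d ≠ 0) (hδ : 0 < δ) :
    ∀ᶠ m : ℕ in atTop, ∀ M : ℕ,
      ∑ n ∈ Finset.Icc m M, (A : ℝ) ^ (-(δ * (n : ℝ) ^ d)) ≤ δ * Real.log A := by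
  have hA1 : (1 : ℝ) < A := by exact_mod_cast hA
  let q : ℝ := (A : ℝ) ^ (-δ)
  have hq0 : 0 ≤ q := by positivity
  have hq1 : q < 1 := Real.rpow_lt_one_of_one_lt_of_neg hA1 (neg_neg_of_pos hδ)
  have hlim : Tendsto (fun m : ℕ => q ^ m / (1 - q)) atTop (𝓝 0) := by
    simpa using (tendsto_pow_atTop_nhds_zero_of_lt_one hq0 hq1).div_const (1 - q)
  filter_upwards [hlim.eventually_le_const (mul_pos hδ (Real.log_pos hA1))] with m hm M
  calc ∑ n ∈ Finset.Icc m M, (A : ℝ) ^ (-(δ * (n : ℝ) ^ d))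
      ≤ ∑ n ∈ Finset.Ico m (M + 1), q ^ n := by
        refine Finset.sum_le_sum fun n _ => ?_
        have hn : (n : ℝ) ≤ (n : ℝ) ^ d := by exact_mod_cast Nat.le_self_pow hd n
        rw [← Real.rpow_natCast q n, ← Real.rpow_mul (Nat.cast_nonneg A), neg_mul]
        gcongr
        exact hA1.le
    _ ≤ q ^ m / (1 - q) := geom_sum_Ico_le_of_lt_one hq0 hq1
    _ ≤ δ * Real.log A := hm

theorem integral_mixtureDensity_le_one [NeZero A] [IsProbabilityMeasure μ]
    (hB : ∀ n ≥ m, ((B n).card : ℝ) ≤ (A : ℝ) ^ (θ * (n : ℝ) ^ d))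
    (hδ : ∑ n ∈ Finset.Icc m M, (A : ℝ) ^ (-(δ * (n : ℝ) ^ d)) ≤ δ * Real.log A) :
    ∫ x, mixtureDensity μ B θ δ K o N m M x ∂uniform A d ≤ 1 := by
  have hterm : ∀ l ∈ packings d N m M,
      ∫ x, packingDensity μ B θ K o l N x ∂uniform A d ≤ 1 := fun l hl => by
    obtain ⟨hsub, hpack⟩ := mem_packings.1 hl
    refine integral_packingDensity_le_one μ K o hpack fun p hp => hB _ ?_
    exact (Finset.mem_Icc.1 (Finset.mem_product.1 (hsub hp)).2).1
  unfold mixtureDensity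
  rw [integral_const_mul, integral_finsetSum _ fun l hl => (integrable_of_dependsOn
    (dependsOn_packingDensity μ B θ K o (mem_packings.1 hl).2)).const_mul _]
  simp only [integral_const_mul]
  rw [Real.rpow_neg A.cast_nonneg]
  refine inv_mul_le_one_of_le₀ ?_ (by positivity)
  exact (Finset.sum_le_sum fun l hl => mul_le_of_le_one_right (by positivity) (hterm l hl)).trans
    (sum_packings_rpow_neg_le hδ)

theorem rpow_le_mixtureDensity (hA : 2 ≤ A) (hm : 0 < m) {x : Config A d}
    (hx : ∀ v, 0 < wordDist μ K (wordAt x K v)) {l : Finset (Site d × ℕ)}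
    (hl : IsCubePacking N l) (hside : ∀ p ∈ l, p.2 ∈ Finset.Icc m M)
    (hword : ∀ p ∈ l, wordAt x p.2 p.1 ∈ B p.2) :
    (A : ℝ) ^ ((1 - θ - δ) * coveredVolume l - δ * (N : ℝ) ^ d +
      ∑ v ∈ core K (uncovered N l) with residue K v = o,
        ((K : ℝ) ^ d + Real.logb A (wordDist μ K (wordAt x K v)))) ≤
      mixtureDensity μ B θ δ K o N m M x := by
  have hA0 : (0 : ℝ) < A := by positivity
  have : NeZero A := ⟨by positivity⟩
  refine le_trans (le_of_eq ?_) (mul_le_mul_of_nonneg_left (Finset.single_le_sum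
    (f := fun l => (A : ℝ) ^ (-(δ * coveredVolume l)) * packingDensity μ B θ K o l N x)
    (fun _ _ => mul_nonneg (by positivity) (packingDensity_nonneg _ _ _ _ _ _ _ x))
    (hl.mem_packings_of_side_mem hm hside)) (by positivity))
  rw [packingDensity, markedDensity_eq_rpow hword, freeDensity_eq_rpow μ K o _ hA hx,
    ← Real.rpow_add hA0, ← Real.rpow_add hA0, ← Real.rpow_add hA0]
  congr 1
  ring

end Mixture

section Marking

/-- A rule choosing, for every configuration, a packing of `Λ_N` by cubes with sides between `m`
and `M` carrying words of `B`; it looks only at the sites of `Λ_N`. -/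
structure IsMarking (B : ∀ n, Finset (Word A d n)) (N m M : ℕ)
    (l : Config A d → Finset (Site d × ℕ)) : Prop where
  dependsOn : DependsOn l (cube (0 : Site d) N)
  isCubePacking : ∀ x, IsCubePacking N (l x)
  side_mem : ∀ x, ∀ p ∈ l x, p.2 ∈ Finset.Icc m M
  wordAt_mem : ∀ x, ∀ p ∈ l x, wordAt x p.2 p.1 ∈ B p.2

/-- The number of symbols per site saved by encoding the word on `Λ_K` with an ideal code for
`μ ^ K` rather than verbatim. -/
noncomputable def blockGain (μ : Measure (Config A d)) (K : ℕ) (x : Config A d) : ℝ :=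
  1 + Real.logb A (wordDist μ K (wordAt x K 0)) / (K : ℝ) ^ d

theorem dependsOn_blockGain (μ : Measure (Config A d)) (K : ℕ) :
    DependsOn (blockGain μ K) (cube (0 : Site d) K) :=
  dependsOn_comp_wordAt 0 fun w => 1 + Real.logb A (wordDist μ K w) / (K : ℝ) ^ d

theorem integral_blockGain (μ : Measure (Config A d)) [IsProbabilityMeasure μ] (K : ℕ) :
    ∫ x, blockGain μ K x ∂μ = 1 - entH A (wordDist μ K) / (K : ℝ) ^ d := by
  unfold blockGain
  rw [integral_comp_wordAt_zero μ K fun w => 1 + Real.logb A (wordDist μ K w) / (K : ℝ) ^ d]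
  simp only [mul_add, mul_one, Finset.sum_add_distrib, sum_wordDist, entH, ← mul_div_assoc,
    ← Finset.sum_div]
  ring

variable {μ : Measure (Config A d)} {B : ∀ n, Finset (Word A d n)} {θ δ : ℝ} {K N m M : ℕ}
  {l : Config A d → Finset (Site d × ℕ)}

theorem sum_sum_residue_eq_sum_blockGain (hK : 0 < K) (U : Finset (Site d)) (x : Config A d) :
    ∑ o ∈ cube 0 K, ∑ v ∈ core K U with residue K v = o,
      ((K : ℝ) ^ d + Real.logb A (wordDist μ K (wordAt x K v))) =
      (K : ℝ) ^ d * ∑ v ∈ core K U, blockGain μ K (shift v x) := by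
  rw [Finset.sum_fiberwise_of_maps_to fun v _ => residue_mem_cube hK v, Finset.mul_sum]
  refine Finset.sum_congr rfl fun v _ => ?_
  rw [blockGain, wordAt_shift]
  field_simp

theorem IsMarking.dependsOn_sum_core (hl : IsMarking B N m M l) (c : ℝ → ℝ)
    (p : Site d → Prop) [DecidablePred p] (f : Word A d K → ℝ) :
    DependsOn (fun x => c (coveredVolume (l x)) +
      ∑ v ∈ core K (uncovered N (l x)) with p v, f (wordAt x K v)) (cube (0 : Site d) N) := by
  intro x y h
  dsimp only
  rw [hl.dependsOn h]
  congr 1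
  exact Finset.sum_congr rfl fun v hv => dependsOn_comp_wordAt v f fun i hi =>
    h i (cube_subset_of_mem_core_uncovered (Finset.mem_filter.1 hv).1 hi)

theorem IsMarking.entH_wordDist_le_of_residue (hA : 2 ≤ A) [IsProbabilityMeasure μ]
    (hμ : Stationary μ) (hl : IsMarking B N m M l) (hm : 0 < m)
    (hB : ∀ n ≥ m, ((B n).card : ℝ) ≤ (A : ℝ) ^ (θ * (n : ℝ) ^ d))
    (hδ : ∑ n ∈ Finset.Icc m M, (A : ℝ) ^ (-(δ * (n : ℝ) ^ d)) ≤ δ * Real.log A) (o : Site d) :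
    entH A (wordDist μ N) ≤ (N : ℝ) ^ d - ∫ x, ((1 - θ - δ) * coveredVolume (l x) -
      δ * (N : ℝ) ^ d + ∑ v ∈ core K (uncovered N (l x)) with residue K v = o,
        ((K : ℝ) ^ d + Real.logb A (wordDist μ K (wordAt x K v)))) ∂μ := by
  have : NeZero A := ⟨by positivity⟩
  refine entH_wordDist_le hA (dependsOn_mixtureDensity μ B θ δ K o N m M)
    (mixtureDensity_nonneg μ B θ δ K o N m M) (integral_mixtureDensity_le_one K o hB hδ)
    (integrable_of_dependsOn (hl.dependsOn_sum_core (fun c => (1 - θ - δ) * c - δ * (N : ℝ) ^ d) _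
      fun w => (K : ℝ) ^ d + Real.logb A (wordDist μ K w))) ?_
  filter_upwards [hμ.ae_wordDist_pos K] with x hx
  exact rpow_le_mixtureDensity K o hA hm hx (hl.isCubePacking x) (hl.side_mem x)
    (hl.wordAt_mem x)

theorem IsMarking.entH_wordDist_le (hA : 2 ≤ A) [IsProbabilityMeasure μ] (hμ : Stationary μ)
    (hl : IsMarking B N m M l) (hm : 0 < m)
    (hB : ∀ n ≥ m, ((B n).card : ℝ) ≤ (A : ℝ) ^ (θ * (n : ℝ) ^ d))
    (hδ : ∑ n ∈ Finset.Icc m M, (A : ℝ) ^ (-(δ * (n : ℝ) ^ d)) ≤ δ * Real.log A) (hK : 0 < K) :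
    entH A (wordDist μ N) ≤ (N : ℝ) ^ d - ∫ x, ((1 - θ - δ) * coveredVolume (l x) -
      δ * (N : ℝ) ^ d + ∑ v ∈ core K (uncovered N (l x)), blockGain μ K (shift v x)) ∂μ := by
  let L (o : Site d) (x : Config A d) : ℝ := (1 - θ - δ) * coveredVolume (l x) -
    δ * (N : ℝ) ^ d + ∑ v ∈ core K (uncovered N (l x)) with residue K v = o,
      ((K : ℝ) ^ d + Real.logb A (wordDist μ K (wordAt x K v)))
  have hL (o : Site d) : Integrable (L o) μ := integrable_of_dependsOn <|
    hl.dependsOn_sum_core (fun c => (1 - θ - δ) * c - δ * (N : ℝ) ^ d) _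
      fun w => (K : ℝ) ^ d + Real.logb A (wordDist μ K w)
  have hLsum (x : Config A d) : ∑ o ∈ cube 0 K, L o x = (K : ℝ) ^ d *
      ((1 - θ - δ) * coveredVolume (l x) - δ * (N : ℝ) ^ d +
        ∑ v ∈ core K (uncovered N (l x)), blockGain μ K (shift v x)) := by
    rw [Finset.sum_add_distrib, sum_sum_residue_eq_sum_blockGain hK, Finset.sum_const, card_cube,
      nsmul_eq_mul, Nat.cast_pow, mul_add]
  have hsum := Finset.card_nsmul_le_sum (cube (0 : Site d) K) (fun o => (N : ℝ) ^ d - ∫ x, L o x ∂μ)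
    _ fun o _ => hl.entH_wordDist_le_of_residue hA hμ hm hB hδ o
  rw [Finset.sum_sub_distrib, ← integral_finsetSum _ fun o _ => hL o, Finset.sum_const, card_cube,
    nsmul_eq_mul, nsmul_eq_mul, Nat.cast_pow] at hsum
  simp only [hLsum, integral_const_mul] at hsum
  rw [← mul_sub] at hsum
  exact le_of_mul_le_mul_left hsum (by positivity)

end Marking

section Vitali

theorem exists_pairwiseDisjoint_cubes (J : Finset (Site d × ℕ)) (hJ : ∀ p ∈ J, 0 < p.2) :
    ∃ l ⊆ J, ((l : Set (Site d × ℕ)).PairwiseDisjoint fun p => cube p.1 p.2) ∧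
      (J.image Prod.fst).card ≤ 3 ^ d * coveredVolume l := by
  classical
  obtain ⟨u, huJ, hu, hcov⟩ := Vitali.exists_disjoint_subfamily_covering_enlargement
    (fun p : Site d × ℕ => (cube p.1 p.2 : Set (Site d))) (J : Set (Site d × ℕ))
    (fun p => (p.2 : ℝ)) 2 one_lt_two (fun _ _ => by positivity) ((J.sup Prod.snd : ℕ) : ℝ)
    (fun p hp => by exact_mod_cast Finset.le_sup (f := Prod.snd) (Finset.mem_coe.1 hp))
    fun p hp => ⟨p.1, self_mem_cube _ (hJ p hp)⟩
  lift u to Finset (Site d × ℕ) using J.finite_toSet.subset huJ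
  have hsub : J.image Prod.fst ⊆ u.biUnion fun p =>
      Fintype.piFinset fun j => Finset.Ico (p.1 j - 2 * p.2) (p.1 j + p.2) := by
    refine Finset.image_subset_iff.2 fun p hp => ?_
    obtain ⟨q, hq, ⟨s, hsp, hsq⟩, hpq⟩ := hcov p hp
    refine Finset.mem_biUnion.2 ⟨q, hq, Fintype.mem_piFinset.2 fun j => Finset.mem_Ico.2 ?_⟩
    have hpq' : p.2 ≤ 2 * q.2 := by exact_mod_cast hpq
    have := mem_cube.1 (Finset.mem_coe.1 hsp) j
    have := mem_cube.1 (Finset.mem_coe.1 hsq) j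
    omega
  refine ⟨u, Finset.coe_subset.1 huJ, fun p hp q hq hne => Finset.disjoint_coe.1 (hu hp hq hne), ?_⟩
  refine (Finset.card_le_card hsub).trans (Finset.card_biUnion_le.trans ?_)
  rw [coveredVolume, Finset.mul_sum]
  refine Finset.sum_le_sum fun p _ => ?_
  rw [Fintype.card_piFinset, ← mul_pow]
  refine (Finset.prod_le_pow_card _ _ (3 * p.2) fun j _ => ?_).trans_eq
    (by rw [Finset.card_univ, Fintype.card_fin])
  rw [Nat.card_Ico]
  omega

variable {B : ∀ n, Finset (Word A d n)} {N m M : ℕ}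

/-- The cubes inside `Λ_N` with sides between `m` and `M` which carry a word of `B`. -/
def occurrences (B : ∀ n, Finset (Word A d n)) (N m M : ℕ) (x : Config A d) :
    Finset (Site d × ℕ) :=
  {p ∈ cube 0 N ×ˢ Finset.Icc m M | cube p.1 p.2 ⊆ cube 0 N ∧ wordAt x p.2 p.1 ∈ B p.2}

theorem mem_occurrences {x : Config A d} {p : Site d × ℕ} : p ∈ occurrences B N m M x ↔
    (p.1 ∈ cube 0 N ∧ p.2 ∈ Finset.Icc m M) ∧
      cube p.1 p.2 ⊆ cube 0 N ∧ wordAt x p.2 p.1 ∈ B p.2 := by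
  rw [occurrences, Finset.mem_filter, Finset.mem_product]

theorem dependsOn_occurrences : DependsOn (occurrences B N m M) (cube (0 : Site d) N) := by
  refine fun x y h => Finset.ext fun p => ?_
  simp only [mem_occurrences]
  refine and_congr_right fun _ => and_congr_right fun hp => ?_
  rw [wordAt_eq_wordAt_iff.2 fun s hs => h s (hp hs)]

theorem exists_isMarking_card_occurrences_le (B : ∀ n, Finset (Word A d n)) (N M : ℕ)
    (hm : 0 < m) : ∃ l, IsMarking B N m M l ∧
      ∀ x, ((occurrences B N m M x).image Prod.fst).card ≤ 3 ^ d * coveredVolume (l x) := by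
  choose! l hlJ hdisj hcard using exists_pairwiseDisjoint_cubes (d := d)
  have hpos (x : Config A d) : ∀ p ∈ occurrences B N m M x, 0 < p.2 := fun p hp =>
    hm.trans_le (Finset.mem_Icc.1 (mem_occurrences.1 hp).1.2).1
  have hmem (x : Config A d) (p) (hp : p ∈ l (occurrences B N m M x)) :=
    mem_occurrences.1 (hlJ _ (hpos x) hp)
  refine ⟨fun x => l (occurrences B N m M x), ⟨fun x y h => congrArg l (dependsOn_occurrences h),
    fun x => ⟨fun p hp => (hmem x p hp).2.1, hdisj _ (hpos x)⟩, fun x p hp => (hmem x p hp).1.2,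
    fun x p hp => (hmem x p hp).2.2⟩, fun x => hcard _ (hpos x)⟩

theorem filter_exists_wordAt_mem_subset_image_occurrences (hm : 0 < m) (hMN : M ≤ N)
    (x : Config A d) :
    {v ∈ cube 0 (N - M) | ∃ n ∈ Finset.Icc m M, wordAt (shift v x) n 0 ∈ B n} ⊆
      (occurrences B N m M x).image Prod.fst := by
  intro v hv
  obtain ⟨hv, n, hn, hnB⟩ := Finset.mem_filter.1 hv
  have hsub : cube v n ⊆ cube 0 N := fun s hs => mem_cube.2 fun j => by
    have := mem_cube.1 hv j
    have := mem_cube.1 hs j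
    have := Finset.mem_Icc.1 hn
    simp only [Pi.zero_apply] at *
    omega
  exact Finset.mem_image.2 ⟨(v, n), mem_occurrences.2
    ⟨⟨hsub (self_mem_cube v (hm.trans_le (Finset.mem_Icc.1 hn).1)), hn⟩, hsub,
      wordAt_shift x n v ▸ hnB⟩, rfl⟩

theorem exists_isMarking_measureReal_le (B : ∀ n, Finset (Word A d n)) {μ : Measure (Config A d)}
    [IsProbabilityMeasure μ] (hμ : Stationary μ) (hm : 0 < m) (hMN : M ≤ N) :
    ∃ l, IsMarking B N m M l ∧
      ((N : ℝ) - M) ^ d * μ.real {x | ∃ n ∈ Finset.Icc m M, wordAt x n 0 ∈ B n} ≤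
        3 ^ d * ∫ x, (coveredVolume (l x) : ℝ) ∂μ := by
  obtain ⟨l, hl, hcard⟩ := exists_isMarking_card_occurrences_le B N M hm
  refine ⟨l, hl, ?_⟩
  let E : Set (Config A d) := {x | ∃ n ∈ Finset.Icc m M, wordAt x n 0 ∈ B n}
  have hE : MeasurableSet E := by
    have : E = ⋃ n ∈ Finset.Icc m M, (fun x => wordAt x n 0) ⁻¹' (B n : Set (Word A d n)) := by
      ext x
      simp only [E, Set.mem_ofPred_eq, Set.mem_iUnion₂, exists_prop, Set.mem_preimage,
        Finset.mem_coe]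
    rw [this]
    exact Finset.measurableSet_biUnion _ fun n _ => measurable_wordAt n 0 (B n).measurableSet
  have hEint : Integrable (E.indicator (1 : Config A d → ℝ)) μ :=
    (integrable_const 1).indicator hE
  rw [← integral_indicator_one hE, ← Nat.cast_sub hMN, ← Nat.cast_pow, ← card_cube 0 (N - M),
    ← hμ.integral_sum_comp_shift _ hEint, ← integral_const_mul]
  refine integral_mono (integrable_finsetSum _ fun v _ => hμ.integrable_comp_shift v hEint)
    ((integrable_of_dependsOn fun x y h => by rw [hl.dependsOn h]).const_mul _) fun x => ?_
  have hsum : ∑ v ∈ cube 0 (N - M), E.indicator (1 : Config A d → ℝ) (shift v x) =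
      (({v ∈ cube 0 (N - M) | ∃ n ∈ Finset.Icc m M, wordAt (shift v x) n 0 ∈ B n} :
        Finset (Site d)).card : ℝ) := by
    rw [Finset.card_filter, Nat.cast_sum]
    exact Finset.sum_congr rfl fun v _ => by
      simp only [Set.indicator_apply, E, Set.mem_ofPred_eq, Pi.one_apply, Nat.cast_ite,
        Nat.cast_one, Nat.cast_zero]
  simp only [hsum]
  exact_mod_cast (Finset.card_le_card
    (filter_exists_wordAt_mem_subset_image_occurrences hm hMN x)).trans (hcard x)

end Vitali

section Boundary

theorem abs_sum_sub_sum_add_right_le {Γ : Type*} [Add Γ] [IsRightCancelAdd Γ] [DecidableEq Γ]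
    (U : Finset Γ) (r : Γ) {a : Γ → ℝ} {G : ℝ} (ha : ∀ v, |a v| ≤ G) :
    |∑ v ∈ U, a v - ∑ v ∈ U, a (v + r)| ≤ 2 * G * {v ∈ U | v + r ∉ U}.card := by
  have hinj : Function.Injective fun v : Γ => v + r := add_left_injective r
  have hcard : (U.image fun v => v + r).card = U.card := Finset.card_image_of_injective _ hinj
  have hout : ((U.image fun v => v + r) \ U).card = {v ∈ U | v + r ∉ U}.card := by
    rw [← Finset.card_image_of_injective {v ∈ U | v + r ∉ U} hinj, ← Finset.filter_notMem_eq_sdiff,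
      Finset.filter_image]
  have hin : (U \ U.image fun v => v + r).card = {v ∈ U | v + r ∉ U}.card := by
    rw [← hout, Finset.card_sdiff_comm hcard.symm]
  have hbound (s : Finset Γ) : |∑ v ∈ s, a v| ≤ s.card * G :=
    (Finset.abs_sum_le_sum_abs _ _).trans <|
      (Finset.sum_le_card_nsmul _ _ G fun v _ => ha v).trans_eq (nsmul_eq_mul _ _)
  calc |∑ v ∈ U, a v - ∑ v ∈ U, a (v + r)|
      = |∑ v ∈ U \ U.image (fun v => v + r), a v - ∑ v ∈ U.image (fun v => v + r) \ U, a v| := by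
        rw [Finset.sum_sdiff_sub_sum_sdiff, Finset.sum_image hinj.injOn]
    _ ≤ {v ∈ U | v + r ∉ U}.card * G + {v ∈ U | v + r ∉ U}.card * G :=
        (abs_sub _ _).trans (add_le_add (hin ▸ hbound _) (hout ▸ hbound _))
    _ = 2 * G * {v ∈ U | v + r ∉ U}.card := by ring

/-- The sites of `U` whose forward cube of side `R` leaves `U`. -/
def cubeBoundary (R : ℕ) (U : Finset (Site d)) : Finset (Site d) := {v ∈ U | ¬cube v R ⊆ U}

theorem cubeBoundary_subset_cubeBoundary {R S : ℕ} (hRS : R ≤ S) (U : Finset (Site d)) :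
    cubeBoundary R U ⊆ cubeBoundary S U :=
  Finset.monotone_filter_right U fun v _ => mt (cube_subset_cube v hRS).trans

theorem sum_core_add_sum_cubeBoundary (K : ℕ) (U : Finset (Site d)) (a : Site d → ℝ) :
    ∑ v ∈ core K U, a v + ∑ v ∈ cubeBoundary K U, a v = ∑ v ∈ U, a v :=
  Finset.sum_filter_add_sum_filter_not _ _ _

theorem abs_sum_sub_sum_add_le_cubeBoundary {R : ℕ} (U : Finset (Site d)) {r : Site d}
    (hr : r ∈ cube 0 R) {a : Site d → ℝ} {G : ℝ} (ha : ∀ v, |a v| ≤ G) :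
    |∑ v ∈ U, a v - ∑ v ∈ U, a (v + r)| ≤ 2 * G * (cubeBoundary R U).card := by
  have hG : 0 ≤ G := (abs_nonneg _).trans (ha 0)
  refine (abs_sum_sub_sum_add_right_le U r ha).trans ?_
  gcongr
  refine Finset.monotone_filter_right U fun v _ => mt fun hv => hv <| mem_cube.2 fun j => ?_
  simpa only [Pi.add_apply, Pi.zero_apply, zero_add, le_add_iff_nonneg_right, zero_le, true_and,
    add_lt_add_iff_left] using mem_cube.1 hr j

theorem abs_sum_sub_sum_average_le {R : ℕ} (U : Finset (Site d)) {s : Finset (Site d)}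
    (hs : s ⊆ cube 0 R) {c : Site d → ℝ} (hc : ∀ r ∈ s, 0 ≤ c r) (hc1 : ∑ r ∈ s, c r = 1)
    {a : Site d → ℝ} {G : ℝ} (ha : ∀ v, |a v| ≤ G) :
    |∑ v ∈ U, a v - ∑ v ∈ U, ∑ r ∈ s, c r * a (v + r)| ≤ 2 * G * (cubeBoundary R U).card := by
  calc |∑ v ∈ U, a v - ∑ v ∈ U, ∑ r ∈ s, c r * a (v + r)|
      = |∑ r ∈ s, c r * (∑ v ∈ U, a v - ∑ v ∈ U, a (v + r))| := by
        rw [Finset.sum_comm]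
        simp only [mul_sub, Finset.sum_sub_distrib, ← Finset.mul_sum, ← Finset.sum_mul, hc1,
          one_mul]
    _ ≤ ∑ r ∈ s, c r * (2 * G * (cubeBoundary R U).card) := by
        refine (Finset.abs_sum_le_sum_abs _ _).trans (Finset.sum_le_sum fun r hr => ?_)
        rw [abs_mul, abs_of_nonneg (hc r hr)]
        exact mul_le_mul_of_nonneg_left (abs_sum_sub_sum_add_le_cubeBoundary U (hs hr) ha)
          (hc r hr)
    _ = 2 * G * (cubeBoundary R U).card := by rw [← Finset.sum_mul, hc1, one_mul]

/-- The corners of the cubes of side `R` which meet `v + Λ_n`, enlarged to a box. -/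
def reach (R : ℕ) (v : Site d) (n : ℕ) : Finset (Site d) :=
  Fintype.piFinset fun j => Finset.Ico (v j - R) (v j + n)

theorem cubeBoundary_uncovered_subset (R N : ℕ) (l : Finset (Site d × ℕ)) :
    cubeBoundary R (uncovered N l) ⊆
      (cube 0 N \ cube 0 (N - R)) ∪ l.biUnion fun p => reach R p.1 p.2 \ cube p.1 p.2 := by
  intro v hv
  obtain ⟨hvU, hv⟩ := Finset.mem_filter.1 hv
  obtain ⟨hvN, hvl⟩ := Finset.mem_sdiff.1 hvU
  obtain ⟨s, hsv, hsU⟩ := Finset.not_subset.1 hv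
  rw [Finset.mem_union, Finset.mem_sdiff, Finset.mem_biUnion]
  by_cases hsN : s ∈ cube 0 N
  · rw [uncovered, Finset.mem_sdiff, not_and_not_right] at hsU
    obtain ⟨p, hp, hsp⟩ := Finset.mem_biUnion.1 (hsU hsN)
    refine .inr ⟨p, hp, Finset.mem_sdiff.2 ⟨Fintype.mem_piFinset.2 fun j => Finset.mem_Ico.2 ?_,
      fun hvp => hvl (Finset.mem_biUnion.2 ⟨p, hp, hvp⟩)⟩⟩
    have := mem_cube.1 hsv j
    have := mem_cube.1 hsp j
    omega
  · refine .inl ⟨hvN, fun hvR => hsN <| mem_cube.2 fun j => ?_⟩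
    have := mem_cube.1 hsv j
    have := mem_cube.1 hvR j
    simp only [Pi.zero_apply] at *
    omega

theorem cube_subset_reach (R : ℕ) (v : Site d) (n : ℕ) : cube v n ⊆ reach R v n :=
  fun _ hs => Fintype.mem_piFinset.2 fun j =>
    Finset.mem_Ico.2 ⟨(Nat.sub_le _ _).trans (mem_cube.1 hs j).1, (mem_cube.1 hs j).2⟩

theorem card_reach_le (R : ℕ) (v : Site d) (n : ℕ) : (reach R v n).card ≤ (n + R) ^ d := by
  rw [reach, Fintype.card_piFinset]
  refine (Finset.prod_le_pow_card _ _ (n + R) fun j _ => ?_).trans_eq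
    (by rw [Finset.card_univ, Fintype.card_fin])
  rw [Nat.card_Ico]
  omega

theorem card_sdiff_cube_le {R n : ℕ} {η : ℝ} (hη : ((n : ℝ) + R) ^ d ≤ (1 + η) * (n : ℝ) ^ d)
    {v : Site d} {t : Finset (Site d)} (ht : cube v n ⊆ t) (hcard : t.card ≤ (n + R) ^ d) :
    ((t \ cube v n).card : ℝ) ≤ η * (n : ℝ) ^ d := by
  rw [← Finset.card_sdiff_add_card_eq_card ht, card_cube] at hcard
  have : ((t \ cube v n).card : ℝ) + (n : ℝ) ^ d ≤ ((n : ℝ) + R) ^ d := by exact_mod_cast hcard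
  linarith

theorem IsCubePacking.card_cubeBoundary_uncovered_le {R N m : ℕ} {l : Finset (Site d × ℕ)} {η : ℝ}
    (hl : IsCubePacking N l) (hη0 : 0 ≤ η)
    (hη : ∀ n ≥ m, ((n : ℝ) + R) ^ d ≤ (1 + η) * (n : ℝ) ^ d) (hside : ∀ p ∈ l, m ≤ p.2)
    (hN : m + R ≤ N) :
    ((cubeBoundary R (uncovered N l)).card : ℝ) ≤ 2 * η * (N : ℝ) ^ d := by
  have hface : ((cube (0 : Site d) N \ cube 0 (N - R)).card : ℝ) ≤ η * (N : ℝ) ^ d := by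
    refine (card_sdiff_cube_le (hη _ (Nat.le_sub_of_add_le hN))
      (cube_subset_cube 0 (Nat.sub_le N R)) ?_).trans ?_
    · rw [card_cube, Nat.sub_add_cancel ((Nat.le_add_left R m).trans hN)]
    · gcongr
      exact Nat.sub_le N R
  have hcubes : ((l.biUnion fun p => reach R p.1 p.2 \ cube p.1 p.2).card : ℝ) ≤
      η * (N : ℝ) ^ d := by
    have hvol : (coveredVolume l : ℝ) ≤ (N : ℝ) ^ d := by
      exact_mod_cast (Nat.le_add_left _ _).trans_eq hl.card_uncovered_add_coveredVolume
    calc ((l.biUnion fun p => reach R p.1 p.2 \ cube p.1 p.2).card : ℝ)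
        ≤ ∑ p ∈ l, ((reach R p.1 p.2 \ cube p.1 p.2).card : ℝ) := by
          exact_mod_cast Finset.card_biUnion_le
      _ ≤ ∑ p ∈ l, η * (p.2 : ℝ) ^ d :=
          Finset.sum_le_sum fun p hp => card_sdiff_cube_le (hη _ (hside p hp))
            (cube_subset_reach R p.1 p.2) (card_reach_le R p.1 p.2)
      _ = η * coveredVolume l := by rw [← Finset.mul_sum, coveredVolume]; push_cast; rfl
      _ ≤ η * (N : ℝ) ^ d := by gcongr
  have hcard := (Finset.card_le_card (cubeBoundary_uncovered_subset R N l)).trans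
    (Finset.card_union_le _ _)
  rify at hcard
  linarith

theorem sum_sub_le_sum_core {K S : ℕ} (hKS : K ≤ S) (U : Finset (Site d)) {a : Site d → ℝ} {G : ℝ}
    (ha : ∀ v, |a v| ≤ G) :
    ∑ v ∈ U, a v - G * (cubeBoundary S U).card ≤ ∑ v ∈ core K U, a v := by
  have hG : 0 ≤ G := (abs_nonneg _).trans (ha 0)
  have hboundary : ∑ v ∈ cubeBoundary K U, a v ≤ G * (cubeBoundary S U).card := calc
    _ ≤ (cubeBoundary K U).card • G := Finset.sum_le_card_nsmul _ _ _ fun v _ => le_of_abs_le (ha v)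
    _ = G * (cubeBoundary K U).card := by rw [nsmul_eq_mul, mul_comm]
    _ ≤ G * (cubeBoundary S U).card := by
        gcongr
        exact cubeBoundary_subset_cubeBoundary hKS U
  linarith [sum_core_add_sum_cubeBoundary K U a]

theorem eventually_forall_add_pow_le (d R : ℕ) {η : ℝ} (hη : 0 < η) :
    ∀ᶠ m : ℕ in atTop, ∀ n ≥ m, ((n : ℝ) + R) ^ d ≤ (1 + η) * (n : ℝ) ^ d := by
  rw [eventually_forall_ge_atTop]
  have hlim : Tendsto (fun n : ℕ => (1 + (R : ℝ) / n) ^ d) atTop (𝓝 1) := by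
    simpa using ((tendsto_const_div_atTop_nhds_zero_nat (R : ℝ)).const_add 1).pow d
  filter_upwards [hlim.eventually_le_const (lt_add_of_pos_right 1 hη), eventually_gt_atTop 0]
    with n hn hn0
  have hn0' : (n : ℝ) ≠ 0 := by exact_mod_cast hn0.ne'
  calc ((n : ℝ) + R) ^ d = (1 + (R : ℝ) / n) ^ d * (n : ℝ) ^ d := by
        rw [← mul_pow]
        field_simp
    _ ≤ (1 + η) * (n : ℝ) ^ d := by gcongr

end Boundary

section MeanErgodic

theorem exists_mem_forall_fixed_of_norm_le {E ι : Type*} [NormedAddCommGroup E]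
    [InnerProductSpace ℝ E] [CompleteSpace E] {C : Set E} (hne : C.Nonempty) (hclosed : IsClosed C)
    (hconv : Convex ℝ C) {T : ι → E → E} (hT : ∀ i, Set.MapsTo (T i) C C)
    (hnorm : ∀ i y, ‖T i y‖ ≤ ‖y‖) : ∃ z ∈ C, ∀ i, T i z = z := by
  obtain ⟨z, hzC, hz⟩ := exists_norm_eq_iInf_of_complete_convex hne hclosed.isComplete hconv 0
  rw [norm_eq_iInf_iff_real_inner_le_zero hconv hzC] at hz
  refine ⟨z, hzC, fun i => ?_⟩
  have hinner := hz _ (hT i hzC)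
  rw [zero_sub, inner_neg_left, inner_sub_right, real_inner_self_eq_norm_sq] at hinner
  have hdist : ‖z - T i z‖ ^ 2 ≤ 0 := by
    rw [norm_sub_sq_real]
    linarith [pow_le_pow_left₀ (norm_nonneg _) (hnorm i z) 2]
  rw [eq_comm, ← sub_eq_zero, ← norm_eq_zero]
  exact pow_eq_zero_iff two_ne_zero |>.1 (hdist.antisymm (sq_nonneg _))

section Probability

variable {Ω : Type*} [MeasurableSpace Ω] {μ : Measure Ω} [IsProbabilityMeasure μ]

theorem integral_abs_le_norm (f : Lp ℝ 2 μ) : ∫ x, |f x| ∂μ ≤ ‖f‖ := by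
  calc ∫ x, |f x| ∂μ = (eLpNorm f 1 μ).toReal := by
        rw [eLpNorm_one_eq_lintegral_enorm,
          ← integral_norm_eq_lintegral_enorm (Lp.aestronglyMeasurable f)]
        rfl
    _ ≤ (eLpNorm f 2 μ).toReal := ENNReal.toReal_mono (Lp.eLpNorm_ne_top f)
        (eLpNorm_le_eLpNorm_of_exponent_le one_le_two (Lp.aestronglyMeasurable f))
    _ = ‖f‖ := (Lp.norm_def f).symm

theorem integral_abs_sub_integral_le {Y : Ω → ℝ} (hY : Integrable Y μ) (κ : ℝ) :
    ∫ x, |Y x - ∫ y, Y y ∂μ| ∂μ ≤ 2 * ∫ x, |Y x - κ| ∂μ := by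
  have hYκ : Integrable (fun x => Y x - κ) μ := hY.sub (integrable_const κ)
  have hmean : |κ - ∫ y, Y y ∂μ| ≤ ∫ x, |Y x - κ| ∂μ := by
    have : ∫ y, Y y ∂μ - κ = ∫ x, (Y x - κ) ∂μ := by
      rw [integral_sub hY (integrable_const κ), integral_const, probReal_univ, one_smul]
    rw [abs_sub_comm, this]
    exact abs_integral_le_integral_abs
  calc ∫ x, |Y x - ∫ y, Y y ∂μ| ∂μ
      ≤ ∫ x, (|Y x - κ| + |κ - ∫ y, Y y ∂μ|) ∂μ :=
        integral_mono (hY.sub (integrable_const _)).abs (hYκ.abs.add (integrable_const _))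
          fun x => abs_sub_le _ _ _
    _ = ∫ x, |Y x - κ| ∂μ + |κ - ∫ y, Y y ∂μ| := by
        rw [integral_add hYκ.abs (integrable_const _), integral_const, probReal_univ, one_smul]
    _ ≤ 2 * ∫ x, |Y x - κ| ∂μ := by linarith

end Probability

variable {μ : Measure (Config A d)}

theorem ErgodicShift.ae_eq_const [IsProbabilityMeasure μ] (hμ : ErgodicShift μ)
    {f : Config A d → ℝ} (hf : Measurable f) (hinv : ∀ r, f ∘ shift r =ᵐ[μ] f) :
    ∃ κ, f =ᵐ[μ] Function.const _ κ := by
  refine exists_eventuallyEq_const_of_forall_separating MeasurableSet fun U hU => ?_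
  -- A strictly invariant modification of `f ⁻¹' U`: eventually along shifts, `f` lies in `U`.
  let E : Set (Config A d) := ⋃ a : Site d, ⋂ r : Site d, shift (r + a) ⁻¹' (f ⁻¹' U)
  have hE : MeasurableSet E :=
    .iUnion fun a => .iInter fun r => measurable_shift _ (hf hU)
  have mem_E (x : Config A d) : x ∈ E ↔ ∃ a, ∀ r, f (shift (r + a) x) ∈ U := by
    simp only [E, Set.mem_iUnion, Set.mem_iInter, Set.mem_preimage]
  have hEinv (s : Site d) : shift s ⁻¹' E = E := by
    ext x
    rw [Set.mem_preimage, mem_E, mem_E]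
    simp only [shift_shift]
    exact ⟨fun ⟨a, ha⟩ => ⟨a + s, fun r => add_assoc r a s ▸ ha r⟩,
      fun ⟨a, ha⟩ => ⟨a, fun r => add_right_comm r a s ▸ ha (r + s)⟩⟩
  have hEU : ∀ᵐ x ∂μ, x ∈ E ↔ f x ∈ U := by
    filter_upwards [ae_all_iff.2 hinv] with x hx
    simp only [Function.comp_apply] at hx
    simp only [mem_E, hx, forall_const, exists_const]
  rcases hμ.2 E hE hEinv with h | h
  · right
    filter_upwards [hEU, measure_eq_zero_iff_ae_notMem.1 h] with x hx hxE
    exact fun hxU => hxE (hx.2 hxU)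
  · left
    filter_upwards [hEU, (mem_ae_iff_prob_eq_one hE).2 h] with x hx hxE
    exact hx.1 hxE

/-- The Koopman operator of `σ_r` on `L²(μ)`. -/
noncomputable def koopman (h : Stationary μ) (r : Site d) : Lp ℝ 2 μ →ₗᵢ[ℝ] Lp ℝ 2 μ :=
  Lp.compMeasurePreservingₗᵢ ℝ (shift r) (h.measurePreserving r)

theorem coeFn_koopman (h : Stationary μ) (r : Site d) (f : Lp ℝ 2 μ) :
    koopman h r f =ᵐ[μ] f ∘ shift r :=
  Lp.coeFn_compMeasurePreserving f (h.measurePreserving r)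

theorem koopman_koopman (h : Stationary μ) (r s : Site d) (f : Lp ℝ 2 μ) :
    koopman h s (koopman h r f) = koopman h (r + s) f := by
  refine Lp.ext ?_
  filter_upwards [coeFn_koopman h s (koopman h r f), coeFn_koopman h (r + s) f,
    (h.measurePreserving s).quasiMeasurePreserving.ae (coeFn_koopman h r f)] with x hs hrs hr
  rw [hs, hrs, Function.comp_apply, hr, Function.comp_apply, Function.comp_apply, shift_shift]

theorem ErgodicShift.exists_eq_const_of_koopman_eq [IsProbabilityMeasure μ] (hμ : ErgodicShift μ)
    {z : Lp ℝ 2 μ} (hz : ∀ r, koopman hμ.1 r z = z) : ∃ κ, z = Lp.const 2 μ κ := by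
  obtain ⟨κ, hκ⟩ := hμ.ae_eq_const (Lp.stronglyMeasurable z).measurable fun r =>
    (coeFn_koopman hμ.1 r z).symm.trans (by rw [hz r])
  exact ⟨κ, Lp.ext (hκ.trans (Lp.coeFn_const 2 μ κ).symm)⟩

theorem mapsTo_koopman_closure_convexHull (h : Stationary μ) (f : Lp ℝ 2 μ) (s : Site d) :
    Set.MapsTo (koopman h s) (closure (convexHull ℝ (Set.range fun r => koopman h r f)))
      (closure (convexHull ℝ (Set.range fun r => koopman h r f))) := by
  refine Set.MapsTo.closure (fun y hy => ?_) (koopman h s).continuous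
  have himage := Set.mem_image_of_mem (koopman h s).toLinearMap hy
  rw [LinearMap.image_convexHull] at himage
  refine convexHull_mono ?_ himage
  rintro _ ⟨_, ⟨r, rfl⟩, rfl⟩
  exact ⟨r + s, (koopman_koopman h r s f).symm⟩

theorem coeFn_sum_smul_koopman_toLp (h : Stationary μ) {ψ : Config A d → ℝ} (hψ : MemLp ψ 2 μ)
    (s : Finset (Site d)) (c : Site d → ℝ) :
    ⇑(∑ r ∈ s, c r • koopman h r hψ.toLp) =ᵐ[μ] fun x => ∑ r ∈ s, c r * ψ (shift r x) := by
  filter_upwards [Lp.coeFn_fun_finsetSum s fun r => c r • koopman h r hψ.toLp,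
    ae_all_iff.2 fun r => Lp.coeFn_smul (c r) (koopman h r hψ.toLp),
    ae_all_iff.2 fun r => coeFn_koopman h r hψ.toLp,
    ae_all_iff.2 fun r => (h.measurePreserving r).quasiMeasurePreserving.ae hψ.coeFn_toLp]
    with x hsum hsmul hkoopman htoLp
  simp only [hsum, hsmul, Pi.smul_apply, hkoopman, Function.comp_apply, htoLp, smul_eq_mul]

variable [IsProbabilityMeasure μ]

theorem ErgodicShift.exists_const_mem_closure_convexHull (hμ : ErgodicShift μ) (f : Lp ℝ 2 μ) :
    ∃ κ, Lp.const 2 μ κ ∈ closure (convexHull ℝ (Set.range fun r => koopman hμ.1 r f)) := by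
  obtain ⟨z, hzC, hz⟩ := exists_mem_forall_fixed_of_norm_le
    ((Set.range_nonempty _).convexHull (𝕜 := ℝ)).closure isClosed_closure
    (convex_convexHull ℝ _).closure (mapsTo_koopman_closure_convexHull hμ.1 f)
    fun r y => ((koopman hμ.1 r).norm_map y).le
  obtain ⟨κ, rfl⟩ := hμ.exists_eq_const_of_koopman_eq hz
  exact ⟨κ, hzC⟩

theorem ErgodicShift.exists_integral_abs_average_sub_le (hμ : ErgodicShift μ) {ψ : Config A d → ℝ}
    (hψ : MemLp ψ 2 μ) {δ : ℝ} (hδ : 0 < δ) :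
    ∃ (s : Finset (Site d)) (c : Site d → ℝ), (∀ r ∈ s, 0 ≤ c r) ∧ ∑ r ∈ s, c r = 1 ∧
      ∫ x, |∑ r ∈ s, c r * ψ (shift r x) - ∫ y, ψ y ∂μ| ∂μ ≤ δ := by
  have hint (r : Site d) : Integrable (fun x => ψ (shift r x)) μ :=
    hμ.1.integrable_comp_shift r (hψ.integrable one_le_two)
  obtain ⟨κ, hκ⟩ := hμ.exists_const_mem_closure_convexHull hψ.toLp
  obtain ⟨y, hy, hyκ⟩ := Metric.mem_closure_iff.1 hκ (δ / 2) (half_pos hδ)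
  rw [convexHull_range_eq_exists_affineCombination] at hy
  obtain ⟨s, c, hc, hc1, rfl⟩ := hy
  rw [Finset.affineCombination_eq_linear_combination s _ c hc1, dist_comm, dist_eq_norm] at hyκ
  refine ⟨s, c, hc, hc1, ?_⟩
  let Y (x : Config A d) : ℝ := ∑ r ∈ s, c r * ψ (shift r x)
  have hY : Integrable Y μ := integrable_finsetSum s fun r _ => (hint r).const_mul _
  have hYint : ∫ x, Y x ∂μ = ∫ x, ψ x ∂μ := by
    rw [integral_finsetSum _ fun r _ => (hint r).const_mul _]
    simp only [integral_const_mul, hμ.1.integral_comp_shift _ hψ.aestronglyMeasurable,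
      ← Finset.sum_mul, hc1, one_mul]
  have hYκ : ⇑(∑ r ∈ s, c r • koopman hμ.1 r hψ.toLp - Lp.const 2 μ κ) =ᵐ[μ]
      fun x => Y x - κ := by
    filter_upwards [Lp.coeFn_sub (∑ r ∈ s, c r • koopman hμ.1 r hψ.toLp) (Lp.const 2 μ κ),
      coeFn_sum_smul_koopman_toLp hμ.1 hψ s c, Lp.coeFn_const 2 μ κ] with x hsub hsum hconst
    rw [hsub, Pi.sub_apply, hsum, hconst, Function.const_apply]
  calc ∫ x, |Y x - ∫ y, ψ y ∂μ| ∂μ ≤ 2 * ∫ x, |Y x - κ| ∂μ :=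
        hYint ▸ integral_abs_sub_integral_le hY κ
    _ = 2 * ∫ x, |(∑ r ∈ s, c r • koopman hμ.1 r hψ.toLp - Lp.const 2 μ κ :) x| ∂μ :=
        congrArg (2 * ·) (integral_congr_ae (hYκ.fun_comp abs).symm)
    _ ≤ δ := by linarith [integral_abs_le_norm (∑ r ∈ s, c r • koopman hμ.1 r hψ.toLp -
        Lp.const 2 μ κ)]

theorem exists_subset_cube_zero (s : Finset (Site d)) : ∃ R, s ⊆ cube 0 R := by
  refine ⟨∑ r ∈ s, ∑ j, r j + 1, fun r hr => mem_cube.2 fun j => ⟨Nat.zero_le _, ?_⟩⟩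
  rw [Pi.zero_apply, zero_add, Nat.lt_succ_iff]
  exact (Finset.single_le_sum_of_canonicallyOrdered (f := r) (Finset.mem_univ j)).trans
    (Finset.single_le_sum_of_canonicallyOrdered (f := fun r : Site d => ∑ j, r j) hr)

theorem ErgodicShift.exists_abs_sum_sub_le (hμ : ErgodicShift μ) {ψ : Config A d → ℝ}
    (hψm : Measurable ψ) {G : ℝ} (hG : ∀ x, |ψ x| ≤ G) {δ : ℝ} (hδ : 0 < δ) :
    ∃ (R : ℕ) (g : Config A d → ℝ), Integrable g μ ∧ (∀ x, 0 ≤ g x) ∧ ∫ x, g x ∂μ ≤ δ ∧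
      ∀ (U : Finset (Site d)) (x : Config A d),
        |∑ v ∈ U, ψ (shift v x) - U.card * ∫ y, ψ y ∂μ| ≤
          2 * G * (cubeBoundary R U).card + ∑ v ∈ U, g (shift v x) := by
  have hψ : MemLp ψ 2 μ := .of_bound hψm.aestronglyMeasurable G (.of_forall hG)
  obtain ⟨s, c, hc, hc1, hδs⟩ := hμ.exists_integral_abs_average_sub_le hψ hδ
  obtain ⟨R, hR⟩ := exists_subset_cube_zero s
  refine ⟨R, fun x => |∑ r ∈ s, c r * ψ (shift r x) - ∫ y, ψ y ∂μ|, ?_, fun _ => abs_nonneg _,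
    hδs, fun U x => ?_⟩
  · exact ((integrable_finsetSum s fun r _ => (hμ.1.integrable_comp_shift r
      (hψ.integrable one_le_two)).const_mul _).sub (integrable_const _)).abs
  · refine (abs_sub_le _ (∑ v ∈ U, ∑ r ∈ s, c r * ψ (shift (v + r) x)) _).trans (add_le_add
      (abs_sum_sub_sum_average_le U hR hc hc1 fun v => hG (shift v x)) ?_)
    rw [← nsmul_eq_mul, ← Finset.sum_const, ← Finset.sum_sub_distrib]
    simp only [shift_shift, add_comm]
    exact Finset.abs_sum_le_sum_abs _ _

end MeanErgodic

section Coding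

theorem card_le_rpow_of_length_le {α W : Type*} [Fintype α] (hα : 2 ≤ Fintype.card α)
    {f : W → List α} (hf : Function.Injective f) {s : Finset W} {t : ℝ}
    (hs : ∀ w ∈ s, ((f w).length : ℝ) ≤ t) :
    (s.card : ℝ) ≤ (Fintype.card α : ℝ) ^ (t + 1) := by
  rcases s.eq_empty_or_nonempty with rfl | ⟨w₀, hw₀⟩
  · rw [Finset.card_empty, Nat.cast_zero]
    positivity
  have ht : 0 ≤ t := (Nat.cast_nonneg _).trans (hs w₀ hw₀)
  have hfiber (i : ℕ) : {w ∈ s | (f w).length = i}.card ≤ Fintype.card α ^ i := by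
    rw [← card_vector, ← Finset.card_univ]
    refine Finset.card_le_card_of_forall_subsingleton (fun w (y : List.Vector α i) => f w = y.1)
      (fun w hw => ⟨⟨f w, (Finset.mem_filter.1 hw).2⟩, Finset.mem_univ _, rfl⟩)
      fun _ _ _ hw _ hw' => hf (hw.2.trans hw'.2.symm)
  have hcard : s.card ≤ Fintype.card α ^ (⌊t⌋₊ + 1) := calc
    s.card = ∑ i ∈ Finset.range (⌊t⌋₊ + 1), {w ∈ s | (f w).length = i}.card :=
        Finset.card_eq_sum_card_fiberwise fun w hw =>
          Finset.mem_coe.2 (Finset.mem_range_succ_iff.2 (Nat.le_floor (hs w hw)))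
    _ ≤ ∑ i ∈ Finset.range (⌊t⌋₊ + 1), Fintype.card α ^ i := Finset.sum_le_sum fun i _ => hfiber i
    _ ≤ Fintype.card α ^ (⌊t⌋₊ + 1) :=
        (Nat.geomSum_lt hα fun _ => Finset.mem_range.1).le
  calc (s.card : ℝ) ≤ (Fintype.card α : ℝ) ^ (⌊t⌋₊ + 1) := by exact_mod_cast hcard
    _ = (Fintype.card α : ℝ) ^ ((⌊t⌋₊ : ℝ) + 1) := by rw [← Real.rpow_natCast, Nat.cast_add_one]
    _ ≤ (Fintype.card α : ℝ) ^ (t + 1) := by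
        gcongr
        · exact_mod_cast one_le_two.trans hα
        · exact Nat.floor_le ht

theorem ae_eventually_not_of_measureReal_exists_le {Ω : Type*} [MeasurableSpace Ω] {ν : Measure Ω}
    [IsFiniteMeasure ν] {Q : Ω → ℕ → Prop}
    (hQ : ∀ ε > 0, ∀ᶠ m in atTop, ∀ M, ν.real {x | ∃ n ∈ Finset.Icc m M, Q x n} ≤ ε) :
    ∀ᵐ x ∂ν, ∀ᶠ n in atTop, ¬Q x n := by
  suffices hzero : ν.real {x | ∃ᶠ n in atTop, Q x n} ≤ 0 from
    (measure_eq_zero_iff_ae_notMem.1 ((measureReal_eq_zero_iff).1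
      (hzero.antisymm measureReal_nonneg))).mono fun _ => not_frequently.1
  refine le_of_forall_pos_le_add fun ε hε => ?_
  rw [zero_add]
  obtain ⟨m, hm⟩ := (hQ ε hε).exists
  let T (M : ℕ) : Set Ω := {x | ∃ n ∈ Finset.Icc m M, Q x n}
  have hmono : Monotone T := fun _ _ hM _ ⟨n, hn, hx⟩ =>
    ⟨n, Finset.Icc_subset_Icc_right hM hn, hx⟩
  have hsub : {x | ∃ᶠ n in atTop, Q x n} ⊆ ⋃ M, T M := fun x hx =>
    let ⟨n, hn, hxn⟩ := frequently_atTop.1 hx m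
    Set.mem_iUnion.2 ⟨n, n, Finset.mem_Icc.2 ⟨hn, le_rfl⟩, hxn⟩
  have hlim : Tendsto (fun M => ν.real (T M)) atTop (𝓝 (ν.real (⋃ M, T M))) :=
    (ENNReal.tendsto_toReal (measure_ne_top _ _)).comp (tendsto_measure_iUnion_atTop hmono)
  exact (measureReal_mono hsub).trans (le_of_tendsto' hlim hm)

end Coding

section Converse

variable {μ : Measure (Config A d)} [IsProbabilityMeasure μ] {B : ∀ n, Finset (Word A d n)}
  {h θ δ : ℝ}

theorem ErgodicShift.exists_eventually_le_sum_core (hμ : ErgodicShift μ) {ψ : Config A d → ℝ}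
    (hψ : Measurable ψ) {G : ℝ} (hG : ∀ x, |ψ x| ≤ G) (K : ℕ) (hδ : 0 < δ) :
    ∃ g : Config A d → ℝ, Integrable g μ ∧ ∫ x, g x ∂μ ≤ δ ∧ ∀ᶠ m in atTop, ∀ᶠ N in atTop,
      ∀ l, IsCubePacking N l → (∀ p ∈ l, m ≤ p.2) → ∀ x,
        (uncovered N l).card * ∫ y, ψ y ∂μ - δ * (N : ℝ) ^ d - ∑ v ∈ cube 0 N, g (shift v x) ≤
          ∑ v ∈ core K (uncovered N l), ψ (shift v x) := by
  have hG0 : 0 ≤ G := (abs_nonneg _).trans (hG μ.nonempty_of_neZero.some)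
  obtain ⟨R, g, hgint, hg0, hgδ, hg⟩ := hμ.exists_abs_sum_sub_le hψ hG hδ
  refine ⟨g, hgint, hgδ, ?_⟩
  have hη : 0 < δ / (6 * G + 1) := by positivity
  filter_upwards [eventually_forall_add_pow_le d (max R K) hη] with m hm
  filter_upwards [eventually_ge_atTop (m + max R K)] with N hN l hl hside x
  let U := uncovered N l
  have hboundary : 3 * G * (cubeBoundary (max R K) U).card ≤ δ * (N : ℝ) ^ d := calc
    _ ≤ 3 * G * (2 * (δ / (6 * G + 1)) * (N : ℝ) ^ d) := by
        gcongr
        exact hl.card_cubeBoundary_uncovered_le hη.le hm hside hN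
    _ = 6 * G / (6 * G + 1) * (δ * (N : ℝ) ^ d) := by ring
    _ ≤ δ * (N : ℝ) ^ d :=
        mul_le_of_le_one_left (by positivity) (div_le_one_of_le₀ (by linarith) (by linarith))
  have hmono : 2 * G * (cubeBoundary R U).card ≤ 2 * G * (cubeBoundary (max R K) U).card := by
    gcongr
    exact cubeBoundary_subset_cubeBoundary (le_max_left R K) U
  have hsub : ∑ v ∈ U, g (shift v x) ≤ ∑ v ∈ cube 0 N, g (shift v x) :=
    Finset.sum_le_sum_of_subset_of_nonneg Finset.sdiff_subset fun v _ _ => hg0 _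
  linarith [neg_le_of_abs_le (hg U x),
    sum_sub_le_sum_core (le_max_right R K) U fun v => hG (shift v x)]

theorem IsMarking.integrable_coveredVolume {N m M : ℕ}
    {l : Config A d → Finset (Site d × ℕ)} (hl : IsMarking B N m M l) :
    Integrable (fun x => (coveredVolume (l x) : ℝ)) μ :=
  integrable_of_dependsOn (S := cube 0 N) fun _ _ hxy => by rw [hl.dependsOn hxy]

theorem IsMarking.integrable_sum_core_blockGain {K N m M : ℕ}
    {l : Config A d → Finset (Site d × ℕ)} (hl : IsMarking B N m M l) :
    Integrable (fun x => ∑ v ∈ core K (uncovered N (l x)), blockGain μ K (shift v x)) μ := by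
  have hdep := hl.dependsOn_sum_core (fun _ => 0) (fun _ => True) fun w =>
    1 + Real.logb A (wordDist μ K w) / (K : ℝ) ^ d
  simp only [Finset.filter_true, zero_add] at hdep
  simpa only [blockGain, wordAt_shift] using integrable_of_dependsOn hdep

theorem IsMarking.le_integral_of_le_sum_core (hμ : Stationary μ) {K N m M : ℕ}
    {l : Config A d → Finset (Site d × ℕ)} (hl : IsMarking B N m M l) {g : Config A d → ℝ}
    (hg : Integrable g μ) (hgδ : ∫ x, g x ∂μ ≤ δ) (hgain : 1 - h - δ ≤ ∫ x, blockGain μ K x ∂μ)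
    (hcore : ∀ x, (uncovered N (l x)).card * ∫ y, blockGain μ K y ∂μ - δ * (N : ℝ) ^ d -
        ∑ v ∈ cube 0 N, g (shift v x) ≤
      ∑ v ∈ core K (uncovered N (l x)), blockGain μ K (shift v x)) :
    (h - θ) * ∫ x, (coveredVolume (l x) : ℝ) ∂μ + (1 - h - 4 * δ) * (N : ℝ) ^ d ≤
      ∫ x, ((1 - θ - δ) * coveredVolume (l x) - δ * (N : ℝ) ^ d +
        ∑ v ∈ core K (uncovered N (l x)), blockGain μ K (shift v x)) ∂μ := by
  have hV : Integrable (fun x => (coveredVolume (l x) : ℝ)) μ := hl.integrable_coveredVolume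
  have haffine : Integrable (fun x => (h - θ) * coveredVolume (l x) +
      (1 - h - 3 * δ) * (N : ℝ) ^ d) μ := (hV.const_mul _).add (integrable_const _)
  have hsum : Integrable (fun x => ∑ v ∈ cube 0 N, g (shift v x)) μ :=
    integrable_finsetSum _ fun v _ => hμ.integrable_comp_shift v hg
  have hint : ∫ x, ((h - θ) * coveredVolume (l x) + (1 - h - 3 * δ) * (N : ℝ) ^ d -
      ∑ v ∈ cube 0 N, g (shift v x)) ∂μ = (h - θ) * ∫ x, (coveredVolume (l x) : ℝ) ∂μ +
        (1 - h - 3 * δ) * (N : ℝ) ^ d - (N : ℝ) ^ d * ∫ x, g x ∂μ := by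
    rw [integral_sub haffine hsum, integral_add (hV.const_mul _) (integrable_const _),
      integral_const_mul, integral_const, probReal_univ, one_smul,
      hμ.integral_sum_comp_shift _ hg, card_cube, Nat.cast_pow]
  have hmean : (N : ℝ) ^ d * ∫ x, g x ∂μ ≤ (N : ℝ) ^ d * δ := by gcongr
  refine le_trans (by linarith) (hint.symm.trans_le (integral_mono (haffine.sub hsum)
    (((hV.const_mul _).sub (integrable_const _)).add hl.integrable_sum_core_blockGain)
    fun x => ?_))
  have hcard : ((uncovered N (l x)).card : ℝ) + coveredVolume (l x) = (N : ℝ) ^ d := by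
    exact_mod_cast (hl.isCubePacking x).card_uncovered_add_coveredVolume
  have hfree : ((N : ℝ) ^ d - coveredVolume (l x)) * (1 - h - δ) ≤
      (uncovered N (l x)).card * ∫ y, blockGain μ K y ∂μ := by
    rw [← hcard, add_sub_cancel_right]
    gcongr
  linarith [hcore x]

theorem ErgodicShift.eventually_entH_wordDist_le (hA : 2 ≤ A) (hd : d ≠ 0) (hμ : ErgodicShift μ)
    (hrate : HasEntropyRate μ h)
    (hB : ∀ᶠ n in atTop, ((B n).card : ℝ) ≤ (A : ℝ) ^ (θ * (n : ℝ) ^ d)) (hδ : 0 < δ) :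
    ∀ᶠ m in atTop, ∀ M, ∀ᶠ N in atTop, ∀ l, IsMarking B N m M l →
      entH A (wordDist μ N) ≤
        (h + 4 * δ) * (N : ℝ) ^ d - (h - θ) * ∫ x, (coveredVolume (l x) : ℝ) ∂μ := by
  have : NeZero A := ⟨by positivity⟩
  obtain ⟨K, hK, hK0⟩ := ((hrate.eventually_le_const (lt_add_of_pos_right h hδ)).and
    (eventually_gt_atTop 0)).exists
  have hgain : 1 - h - δ ≤ ∫ x, blockGain μ K x ∂μ := by
    rw [integral_blockGain]
    linarith
  obtain ⟨G, hG⟩ := exists_abs_le_of_dependsOn (dependsOn_blockGain μ K)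
  obtain ⟨g, hgint, hgδ, hcore⟩ := hμ.exists_eventually_le_sum_core
    (measurable_of_dependsOn (dependsOn_blockGain μ K)) hG K hδ
  filter_upwards [hcore, eventually_sum_rpow_neg_le hA hd hδ, eventually_gt_atTop 0,
    eventually_forall_ge_atTop.2 hB] with m hcore hsum hm hB M
  filter_upwards [hcore] with N hcore l hl
  linarith [hl.entH_wordDist_le hA hμ.1 hm hB (hsum M) hK0,
    hl.le_integral_of_le_sum_core (θ := θ) hμ.1 hgint hgδ hgain fun x =>
      hcore (l x) (hl.isCubePacking x) (fun p hp => (Finset.mem_Icc.1 (hl.side_mem x p hp)).1) x]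

theorem ErgodicShift.eventually_measureReal_exists_mem_le (hA : 2 ≤ A) (hd : d ≠ 0)
    (hμ : ErgodicShift μ) (hrate : HasEntropyRate μ h)
    (hB : ∀ᶠ n in atTop, ((B n).card : ℝ) ≤ (A : ℝ) ^ (θ * (n : ℝ) ^ d)) (hθ : θ < h)
    {ε : ℝ} (hε : 0 < ε) :
    ∀ᶠ m in atTop, ∀ M, μ.real {x | ∃ n ∈ Finset.Icc m M, wordAt x n 0 ∈ B n} ≤ ε := by
  have hθ0 : 0 < h - θ := sub_pos.2 hθ
  let δ : ℝ := (h - θ) * ε / (5 * 3 ^ d)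
  have hδ : 0 < δ := by positivity
  filter_upwards [hμ.eventually_entH_wordDist_le hA hd hrate hB hδ, eventually_gt_atTop 0]
    with m hm hm0 M
  have hlim : Tendsto (fun N : ℕ => (1 - (M : ℝ) / N) ^ d *
      μ.real {x | ∃ n ∈ Finset.Icc m M, wordAt x n 0 ∈ B n}) atTop
      (𝓝 (μ.real {x | ∃ n ∈ Finset.Icc m M, wordAt x n 0 ∈ B n})) := by
    simpa using (((tendsto_const_div_atTop_nhds_zero_nat (M : ℝ)).const_sub 1).pow d).mul_const _
  refine le_of_tendsto hlim ?_
  filter_upwards [hm M, eventually_ge_atTop M, eventually_gt_atTop 0,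
    hrate.eventually_const_le (sub_lt_self h hδ)] with N hN hMN hN0 hlower
  have hN0' : (0 : ℝ) < (N : ℝ) ^ d := by positivity
  rw [le_div_iff₀ hN0'] at hlower
  obtain ⟨l, hl, hcover⟩ := exists_isMarking_measureReal_le B hμ.1 hm0 hMN
  have hvol : (h - θ) * ∫ x, (coveredVolume (l x) : ℝ) ∂μ ≤ 5 * δ * (N : ℝ) ^ d := by
    linarith [hN l hl]
  have hscale : ((N : ℝ) - M) ^ d = (1 - (M : ℝ) / N) ^ d * (N : ℝ) ^ d := by
    rw [← mul_pow, sub_mul, one_mul, div_mul_cancel₀ _ (by positivity)]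
  refine le_of_mul_le_mul_left ?_ (mul_pos hθ0 hN0')
  calc (h - θ) * (N : ℝ) ^ d * ((1 - (M : ℝ) / N) ^ d *
        μ.real {x | ∃ n ∈ Finset.Icc m M, wordAt x n 0 ∈ B n})
      = (h - θ) * (((N : ℝ) - M) ^ d *
          μ.real {x | ∃ n ∈ Finset.Icc m M, wordAt x n 0 ∈ B n}) := by rw [hscale]; ring
    _ ≤ (h - θ) * (3 ^ d * ∫ x, (coveredVolume (l x) : ℝ) ∂μ) := by gcongr
    _ = 3 ^ d * ((h - θ) * ∫ x, (coveredVolume (l x) : ℝ) ∂μ) := by ring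
    _ ≤ 3 ^ d * (5 * δ * (N : ℝ) ^ d) := by gcongr
    _ = (h - θ) * (N : ℝ) ^ d * ε := by simp only [δ]; field_simp

theorem ErgodicShift.ae_eventually_notMem_of_card_le (hA : 2 ≤ A) (hd : d ≠ 0)
    (hμ : ErgodicShift μ) (hrate : HasEntropyRate μ h)
    (hB : ∀ᶠ n in atTop, ((B n).card : ℝ) ≤ (A : ℝ) ^ (θ * (n : ℝ) ^ d)) (hθ : θ < h) :
    ∀ᵐ x ∂μ, ∀ᶠ n in atTop, wordAt x n 0 ∉ B n :=
  ae_eventually_not_of_measureReal_exists_le fun _ hε =>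
    hμ.eventually_measureReal_exists_mem_le hA hd hrate hB hθ hε

end Converse

/-- no sequence of lossless codes beats the entropy bound infinitely
often. For any sequence of injective maps `φ_n` from `n`-words to finite strings over the
alphabet and any `ε > 0`, almost surely `|φ_n(x^n)| > n^d (h - ε)` eventually. -/
theorem no_code_beats_entropy
    (A d : ℕ) (hA : 2 ≤ A) (hd : 1 ≤ d)
    (μ : Measure (Config A d)) [IsProbabilityMeasure μ] (hμ : ErgodicShift μ)
    (h : ℝ) (hrate : HasEntropyRate μ h) (ε : ℝ) (hε : 0 < ε)
    (coder : (n : ℕ) → Word A d n → List (Fin A))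
    (hinj : ∀ n, Function.Injective (coder n)) :
    ∀ᵐ x ∂μ, ∀ᶠ n : ℕ in atTop,
      (n : ℝ) ^ d * (h - ε) < ((coder n (wordAt x n 0)).length : ℝ) := by
  have hd0 : d ≠ 0 := Nat.one_le_iff_ne_zero.1 hd
  let B (n : ℕ) : Finset (Word A d n) := {w | ((coder n w).length : ℝ) ≤ (n : ℝ) ^ d * (h - ε)}
  have hgrow : Tendsto (fun n : ℕ => ε / 2 * (n : ℝ) ^ d) atTop atTop :=
    ((tendsto_pow_atTop hd0).comp tendsto_natCast_atTop_atTop).const_mul_atTop (half_pos hε)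
  have hB : ∀ᶠ n in atTop, ((B n).card : ℝ) ≤ (A : ℝ) ^ ((h - ε / 2) * (n : ℝ) ^ d) := by
    filter_upwards [hgrow.eventually_ge_atTop 1] with n hn
    have hcard := card_le_rpow_of_length_le (by rwa [Fintype.card_fin]) (hinj n)
      fun w (hw : w ∈ B n) => (Finset.mem_filter.1 hw).2
    rw [Fintype.card_fin] at hcard
    have hA1 : (1 : ℝ) ≤ A := by exact_mod_cast one_le_two.trans hA
    exact hcard.trans (Real.rpow_le_rpow_of_exponent_le hA1 (by linarith))
  filter_upwards [hμ.ae_eventually_notMem_of_card_le hA hd0 hrate hB (by linarith)] with x hx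
  filter_upwards [hx] with n hn
  exact not_le.1 fun hle => hn (Finset.mem_filter.2 ⟨Finset.mem_univ _, hle⟩)

end SRU1408
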